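/- Let q ≥ 2·10^23 be a natural number and let χ be a primitive quadratic (real-valued, non-principal, χ² principal) Dirichlet character modulo q with χ(−1) = −1. Then L(1, χ) ≤ (log q)/2. -/

import Mathlib

open scoped ComplexOrder

/-!
Write `f n = χ n` and, for a function `g`, let `A_g(t) = ∑_{n < t} min(n, t - n) g(n)`
(`tentSum`). Summing `∑ f(n) / n` by parts twice, and subtracting the resulting series from twice itself
after regrouping the subtracted copy, gives `L(1, χ) = ∑_t 2 e(t) A_f(t)` with
`e(t) = 2 / ((t - 1) t (t + 1))` (`tentCoeff`, `tendsto_tentCoeff_tentSum`).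

The sum `A_f(t)` is the double sum of `f (1 + k + l)` over `k < ⌊t/2⌋`, `l < ⌈t/2⌉`. Expanding `χ`
in additive characters through its Gauss sum and using Cauchy–Schwarz with Parseval bounds such
a sum over `a × b` pairs by `√(q a b)` (`bilinear`), so `A_f(t) ≤ √q t / 2`. Let `Y = ⌈√q⌉`.
For `t > 2 Y` this bound contributes at most `1` to `L(1, χ)`. For `t ≤ 2 Y` one writes
`f = 1 - F` with `F ≥ 0`; the constant `1` contributes at most `log Y + 0.5292`, and `F` saves
`V = ∑_{n ≤ Y} F(n) (1/n - n / (2 Y²))`. Therefore `L(1, χ) ≤ log Y + 1.5292 - V`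
(`partial_le`), and as `log Y` is `(log q) / 2` up to a tiny error, it suffices that `V ≥ 1.53`.

* If `χ(r) ≠ 1` for some `r ≤ 13`, then `F(n) + F(r n) ≥ 1` for all `n`, which forces
  `V ≥ (log Y - O(1)) / (r + 1) ≥ 1.53` (`sum_kern_lower_of_nonvanishing`).
* Otherwise `χ(m) = 1` for all `m ≤ 16`. The bilinear bound at `t = 26 Y`, together with
  `F(n) ≤ ∑_{p ∣ n} F(p)` and a Mertens estimate for the primes in `(z, 26 Y)`, shows that
  `∑_{p ≤ z} F(p) / p` is at least about `0.65` for `z` close to `Y`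
  (`sum_onPrimes_div_lower`). The numbers `n = m p` with `m ≤ 16` and `p` a prime with
  `F(p) ≠ 0` have a unique such representation, since then `p > 16`, and satisfy `F(m p) = F(p)`;
  summing over them gives `V ≥ 1.53` (`sum_kern_lower_of_vanishing`).
-/

section

open Finset

/-! ### The bilinear character sum bound -/

/-- Parseval on `ZMod q` for a function supported on finitely many distinct points `g k`. -/
lemma parseval {q : ℕ} [NeZero q] {ι : Type*} [DecidableEq ι] (s : Finset ι) (g : ι → ZMod q)
    (hg : Set.InjOn g s) (u : ι → ℂ) :
    ∑ c : ZMod q, ‖∑ k ∈ s, u k * ZMod.stdAddChar (c * g k)‖ ^ 2 = q * ∑ k ∈ s, ‖u k‖ ^ 2 := by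
  have h : ∀ k ∈ s, ∀ l ∈ s, ∑ c : ZMod q, (ZMod.stdAddChar (c * (g k - g l)) : ℂ) =
      if k = l then (q : ℂ) else 0 := by
    intro k hk l hl
    rw [AddChar.sum_mulShift _ (ZMod.isPrimitive_stdAddChar q), ZMod.card]
    by_cases hkl : k = l
    · simp [hkl]
    · have : g k - g l ≠ 0 := fun h ↦ hkl (hg hk hl (sub_eq_zero.mp h))
      simp [hkl, this]
  have hC : (∑ c : ZMod q, ((‖∑ k ∈ s, u k * ZMod.stdAddChar (c * g k)‖ : ℂ)) ^ 2) =
      q * ∑ k ∈ s, (‖u k‖ : ℂ) ^ 2 := by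
    simp only [← Complex.mul_conj', map_sum, map_mul, Finset.sum_mul_sum]
    rw [Finset.sum_comm, Finset.mul_sum]
    refine Finset.sum_congr rfl fun k hk ↦ ?_
    rw [Finset.sum_comm]
    have : ∀ l ∈ s, ∑ c : ZMod q, u k * ZMod.stdAddChar (c * g k) *
        ((starRingEnd ℂ) (u l) * (starRingEnd ℂ) (ZMod.stdAddChar (c * g l))) =
        u k * (starRingEnd ℂ) (u l) * (if k = l then (q : ℂ) else 0) := by
      intro l hl
      rw [← h k hk l hl, Finset.mul_sum]
      refine Finset.sum_congr rfl fun c _ ↦ ?_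
      rw [mul_sub, AddChar.map_sub_eq_div, div_eq_mul_inv, ← AddChar.map_neg_eq_conj,
        AddChar.map_neg_eq_inv]
      ring
    rw [Finset.sum_congr rfl this]
    simp [hk]
    ring
  exact_mod_cast hC

lemma norm_gaussSum {q : ℕ} [NeZero q] (χ : DirichletCharacter ℂ q) (hprim : χ.IsPrimitive) :
    ‖gaussSum χ ZMod.stdAddChar‖ ^ 2 = q := by
  have h := parseval (Finset.univ : Finset (ZMod q)) id Function.injective_id.injOn (fun a ↦ χ a)
  have h2 : ∀ c : ZMod q, ∑ k : ZMod q, χ k * (ZMod.stdAddChar (c * id k) : ℂ) =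
      χ⁻¹ c * gaussSum χ ZMod.stdAddChar := by
    intro c
    rw [← gaussSum_mulShift_of_isPrimitive _ hprim]
    rfl
  simp only [h2, norm_mul, mul_pow, ← Finset.sum_mul] at h
  have h3 : ∀ c : ZMod q, ‖χ⁻¹ c‖ = ‖χ c‖ := by
    intro c
    rw [MulChar.inv_apply_eq_inv, Ring.inverse_eq_inv, norm_inv]
    by_cases hc : IsUnit c
    · rw [← hc.unit_spec, DirichletCharacter.unit_norm_eq_one]; simp
    · simp [MulChar.map_nonunit _ hc]
  simp only [h3] at h
  have hpos : 0 < ∑ c : ZMod q, ‖χ c‖ ^ 2 := by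
    refine Finset.sum_pos' (fun _ _ ↦ by positivity) ⟨1, by simp, by simp⟩
  nlinarith

/-- The bilinear bound when both ranges fit in one period: multiplying by the Gauss sum turns `χ` into
additive characters, which separate `k` from `l`; then Cauchy–Schwarz and Parseval apply. -/
lemma bilinear_small {q : ℕ} [NeZero q] (χ : DirichletCharacter ℂ q) (hprim : χ.IsPrimitive)
    (hquad : χ ^ 2 = 1) (a b : ℕ) (ha : a ≤ q) (hb : b ≤ q) :
    ‖∑ k ∈ range a, ∑ l ∈ range b, χ (1 + k + l)‖ ^ 2 ≤ q * a * b := by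
  have hinv : χ⁻¹ = χ := by
    rw [inv_eq_iff_mul_eq_one, ← sq, hquad]
  have hinj : ∀ a ≤ q, Set.InjOn (fun k : ℕ ↦ (k : ZMod q)) (range a) := by
    intro a ha x hx y hy hxy
    simp only [coe_range, Set.mem_Iio] at hx hy
    have := (ZMod.natCast_eq_natCast_iff' x y q).mp hxy
    rwa [Nat.mod_eq_of_lt (by omega), Nat.mod_eq_of_lt (by omega)] at this
  have hA := fun a ha ↦ parseval (range a) (fun k : ℕ ↦ (k : ZMod q)) (hinj a ha) (fun _ ↦ 1)
  simp only [one_mul, norm_one, one_pow, sum_const, card_range, nsmul_eq_mul, mul_one] at hA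
  set τ := gaussSum χ ZMod.stdAddChar with hτ
  have key : (∑ k ∈ range a, ∑ l ∈ range b, χ (1 + k + l)) * τ =
      ∑ c : ZMod q, χ c * ZMod.stdAddChar c *
        ((∑ k ∈ range a, ZMod.stdAddChar (c * (k : ZMod q))) *
        (∑ l ∈ range b, ZMod.stdAddChar (c * (l : ZMod q)))) := by
    have e : ∀ c : ZMod q, χ c * ZMod.stdAddChar c *
        ((∑ k ∈ range a, ZMod.stdAddChar (c * (k : ZMod q))) *
        (∑ l ∈ range b, ZMod.stdAddChar (c * (l : ZMod q)))) =
        ∑ k ∈ range a, ∑ l ∈ range b, χ c * ZMod.stdAddChar ((1 + (k : ZMod q) + (l : ZMod q)) * c) := by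
      intro c
      rw [Finset.sum_mul_sum, Finset.mul_sum]
      refine Finset.sum_congr rfl fun k _ ↦ ?_
      rw [Finset.mul_sum]
      refine Finset.sum_congr rfl fun l _ ↦ ?_
      rw [mul_assoc, ← AddChar.map_add_eq_mul, ← AddChar.map_add_eq_mul]
      congr 2
      ring
    rw [Finset.sum_congr rfl fun c _ ↦ e c, Finset.sum_mul]
    conv_rhs => rw [Finset.sum_comm]
    refine Finset.sum_congr rfl fun k _ ↦ ?_
    rw [Finset.sum_mul]
    conv_rhs => rw [Finset.sum_comm]
    refine Finset.sum_congr rfl fun l _ ↦ ?_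
    have := gaussSum_mulShift_of_isPrimitive ZMod.stdAddChar hprim (1 + k + l)
    rw [hinv] at this
    rw [← this, gaussSum]
    rfl
  have hn := congrArg norm key
  rw [norm_mul] at hn
  set X := ‖∑ k ∈ range a, ∑ l ∈ range b, χ (1 + k + l)‖
  have hle : X * ‖τ‖ ≤ ∑ c : ZMod q, ‖∑ k ∈ range a, ZMod.stdAddChar (c * (k : ZMod q))‖ *
        ‖∑ l ∈ range b, ZMod.stdAddChar (c * (l : ZMod q))‖ := by
    rw [hn]
    refine (norm_sum_le _ _).trans (Finset.sum_le_sum fun c _ ↦ ?_)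
    rw [norm_mul, norm_mul, norm_mul, AddChar.norm_apply, mul_one]
    exact mul_le_of_le_one_left (by positivity) (DirichletCharacter.norm_le_one χ c)
  have hsq : (X * ‖τ‖) ^ 2 ≤ (q * a) * (q * b) := by
    calc _ ≤ _ := pow_le_pow_left₀ (by positivity) hle 2
      _ ≤ _ := Finset.sum_mul_sq_le_sq_mul_sq _ _ _
      _ = _ := by rw [hA a ha, hA b hb]
  rw [mul_pow, norm_gaussSum χ hprim] at hsq
  have hq : (0 : ℝ) < q := by exact_mod_cast NeZero.pos q
  have : q * X ^ 2 ≤ q * (q * a * b) := by linarith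
  exact le_of_mul_le_mul_left this hq

lemma sum_period {q : ℕ} [NeZero q] (χ : DirichletCharacter ℂ q) (hχ : χ ≠ 1) (c : ZMod q) :
    ∑ k ∈ range q, χ (c + k) = 0 := by
  have h0 : ∑ x : ZMod q, χ (c + x) = 0 := by
    rw [← MulChar.sum_eq_zero_of_ne_one hχ]
    exact Fintype.sum_equiv (Equiv.addLeft c) _ _ fun x ↦ rfl
  rw [← h0]
  refine Finset.sum_bij (fun k _ ↦ (k : ZMod q)) (fun _ _ ↦ by simp) ?_ ?_ (fun _ _ ↦ rfl)
  · intro x hx y hy hxy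
    simp only [mem_range] at hx hy
    have := (ZMod.natCast_eq_natCast_iff' x y q).mp hxy
    rwa [Nat.mod_eq_of_lt hx, Nat.mod_eq_of_lt hy] at this
  · intro x _
    exact ⟨x.val, by simpa using ZMod.val_lt x, by simp⟩

lemma sum_mod {q : ℕ} [NeZero q] (χ : DirichletCharacter ℂ q) (hχ : χ ≠ 1) (c : ZMod q) (b : ℕ) :
    ∑ k ∈ range b, χ (c + k) = ∑ k ∈ range (b % q), χ (c + k) := by
  induction b using Nat.strong_induction_on with
  | _ b ih =>
    rcases lt_or_ge b q with h | h
    · rw [Nat.mod_eq_of_lt h]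
    · have hq := NeZero.pos q
      obtain ⟨m, rfl⟩ := Nat.exists_eq_add_of_le' h
      rw [Finset.sum_range_add, Nat.add_mod_right, ← ih m (by omega)]
      have := sum_period χ hχ (c + m)
      simp only [add_assoc] at this
      simp [this]

/-- The bilinear bound for ranges of any length: whole periods contribute zero, so the lengths may be
reduced modulo `q`. -/
lemma bilinear {q : ℕ} [NeZero q] (χ : DirichletCharacter ℂ q) (hprim : χ.IsPrimitive)
    (hχ : χ ≠ 1) (hquad : χ ^ 2 = 1) (a b : ℕ) :
    ‖∑ k ∈ range a, ∑ l ∈ range b, χ (1 + k + l)‖ ^ 2 ≤ q * a * b := by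
  have h1 : ∀ k : ℕ, ∑ l ∈ range b, χ (1 + k + l) = ∑ l ∈ range (b % q), χ (1 + k + l) :=
    fun k ↦ sum_mod χ hχ _ b
  have h2 : ∑ k ∈ range a, ∑ l ∈ range b, χ (1 + k + l) =
      ∑ k ∈ range (a % q), ∑ l ∈ range (b % q), χ (1 + k + l) := by
    rw [Finset.sum_congr rfl fun k _ ↦ h1 k, Finset.sum_comm, Finset.sum_comm (s := range (a % q))]
    refine Finset.sum_congr rfl fun l _ ↦ ?_
    have := sum_mod χ hχ (1 + l) a
    simpa only [add_right_comm] using this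
  rw [h2]
  have hq := NeZero.pos q
  refine (bilinear_small χ hprim hquad _ _ (Nat.mod_lt _ hq).le (Nat.mod_lt _ hq).le).trans ?_
  have := Nat.mod_le a q
  have := Nat.mod_le b q
  gcongr

/-! ### The value at one as a conditionally convergent series -/

lemma norm_sum_le_q {q : ℕ} [NeZero q] (χ : DirichletCharacter ℂ q) (hχ : χ ≠ 1) (n : ℕ) :
    ‖∑ k ∈ Icc 1 n, χ k‖ ≤ q := by
  have h : ∑ k ∈ Icc 1 n, χ k = ∑ k ∈ range (n % q), χ (1 + k) := by
    rw [← sum_mod χ hχ, ← Finset.Ico_add_one_right_eq_Icc, Finset.sum_Ico_eq_sum_range]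
    simp
  rw [h]
  refine (norm_sum_le _ _).trans ((Finset.sum_le_card_nsmul _ _ 1
    fun k _ ↦ DirichletCharacter.norm_le_one χ _).trans ?_)
  simpa using (Nat.mod_lt n (NeZero.pos q)).le

open Filter Topology MeasureTheory in
/-- The integral representation of `L(s, χ)` for `s > 1`, continued to `s = 1` by dominated
convergence. -/
lemma LFunction_one_eq {q : ℕ} [NeZero q] (χ : DirichletCharacter ℂ q) (hχ : χ ≠ 1) :
    χ.LFunction 1 = ∫ t in Set.Ioi (1 : ℝ), (∑ k ∈ Icc 1 ⌊t⌋₊, χ k) * (t : ℂ) ^ (-(1 + 1) : ℂ) := by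
  have hO : (fun n : ℕ ↦ ∑ k ∈ Icc 1 n, χ k) =O[atTop] fun n ↦ (n : ℝ) ^ (0 : ℝ) := by
    refine Asymptotics.IsBigO.of_bound q (Eventually.of_forall fun n ↦ ?_)
    simpa using norm_sum_le_q χ hχ n
  have hs : ∀ s : ℝ, 1 < s → χ.LFunction s =
      s * ∫ t in Set.Ioi (1 : ℝ), (∑ k ∈ Icc 1 ⌊t⌋₊, χ k) * (t : ℂ) ^ (-((s : ℂ) + 1)) := by
    intro s hs
    have hs' : 1 < (s : ℂ).re := by simpa using hs
    rw [DirichletCharacter.LFunction_eq_LSeries χ hs']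
    exact LSeries_eq_mul_integral _ le_rfl (by linarith)
      (DirichletCharacter.LSeriesSummable_of_one_lt_re χ hs') hO
  have hmono : Tendsto (fun s : ℝ ↦ χ.LFunction s) (𝓝[>] 1) (𝓝 (χ.LFunction 1)) := by
    have := (DirichletCharacter.differentiable_LFunction hχ).continuous.comp Complex.continuous_ofReal
    have h1 := this.tendsto 1
    simp only [Function.comp, Complex.ofReal_one] at h1
    exact h1.mono_left nhdsWithin_le_nhds
  have hint : Tendsto (fun s : ℝ ↦ (s : ℂ) * ∫ t in Set.Ioi (1 : ℝ), (∑ k ∈ Icc 1 ⌊t⌋₊, χ k) *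
      (t : ℂ) ^ (-((s : ℂ) + 1))) (𝓝[>] 1) (𝓝 ((1 : ℝ) * ∫ t in Set.Ioi (1 : ℝ),
        (∑ k ∈ Icc 1 ⌊t⌋₊, χ k) * (t : ℂ) ^ (-(((1 : ℝ) : ℂ) + 1)))) := by
    refine Tendsto.mul ((Complex.continuous_ofReal.tendsto 1).mono_left nhdsWithin_le_nhds) ?_
    refine tendsto_integral_filter_of_dominated_convergence (fun t ↦ q * t ^ (-2 : ℝ)) ?_ ?_ ?_ ?_
    · refine Eventually.of_forall fun s ↦ ?_
      refine Measurable.aestronglyMeasurable ?_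
      refine Measurable.mul ?_ (by fun_prop)
      exact (measurable_from_nat (f := fun n ↦ ∑ k ∈ Icc 1 n, χ k)).comp Nat.measurable_floor
    · filter_upwards [self_mem_nhdsWithin] with s hs
      filter_upwards [ae_restrict_mem measurableSet_Ioi] with t ht
      simp only [Set.mem_Ioi] at hs ht
      rw [norm_mul, Complex.norm_cpow_eq_rpow_re_of_pos (by linarith)]
      refine mul_le_mul (norm_sum_le_q χ hχ _) ?_ (by positivity) (by positivity)
      refine Real.rpow_le_rpow_of_exponent_le ht.le ?_
      simp; linarith
    · exact ((integrableOn_Ioi_rpow_iff one_pos).mpr (by norm_num)).const_mul _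
    · filter_upwards [ae_restrict_mem measurableSet_Ioi] with t ht
      simp only [Set.mem_Ioi] at ht
      refine Tendsto.const_mul _ ?_
      have : Continuous fun s : ℝ ↦ (t : ℂ) ^ (-((s : ℂ) + 1)) := by
        refine Continuous.const_cpow (by fun_prop) (Or.inl ?_)
        exact_mod_cast (by linarith : t ≠ 0)
      exact (this.tendsto 1).mono_left nhdsWithin_le_nhds
  have h := tendsto_nhds_unique (hmono.congr' (by
    filter_upwards [self_mem_nhdsWithin] with s hs' using hs s hs')) hint
  simpa using h

open Filter Topology MeasureTheory in
/-- Abel summation, starting from the integral representation: `∑ χ(n) / n` converges to `L(1, χ)`.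
The sum may start at `0` because `0⁻¹ = 0`. -/
lemma tendsto_sum_div {q : ℕ} [NeZero q] (hq : 1 < q) (χ : DirichletCharacter ℂ q) (hχ : χ ≠ 1) :
    Tendsto (fun n : ℕ ↦ ∑ k ∈ Icc 0 n, (((k : ℝ)⁻¹ : ℝ) : ℂ) * χ k) atTop
      (𝓝 (χ.LFunction 1)) := by
  have : Fact (1 < q) := ⟨hq⟩
  have h0 : χ ((0 : ℕ) : ZMod q) = 0 := by
    rw [Nat.cast_zero, MulChar.map_zero]
  have hder : ∀ t : ℝ, t ≠ 0 → HasDerivAt (fun t : ℝ ↦ ((t⁻¹ : ℝ) : ℂ)) ((-(t ^ 2)⁻¹ : ℝ) : ℂ) t :=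
    fun t ht ↦ (hasDerivAt_inv ht).ofReal_comp
  have hIcc : ∀ n : ℕ, ∑ k ∈ Icc 0 n, χ k = ∑ k ∈ Icc 1 n, χ k := by
    intro n
    rw [← Finset.insert_Icc_add_one_left_eq_Icc n.zero_le, Finset.sum_insert (by simp), h0]
    simp
  have hbd : ∀ t : ℝ, t ≠ 0 → ‖deriv (fun t : ℝ ↦ ((t⁻¹ : ℝ) : ℂ)) t * ∑ k ∈ Icc 0 ⌊t⌋₊, χ k‖ ≤
      q * ‖t ^ (-2 : ℝ)‖ := by
    intro t ht
    rw [(hder t ht).deriv, norm_mul, mul_comm, hIcc]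
    refine mul_le_mul (norm_sum_le_q χ hχ _) ?_ (by positivity) (by positivity)
    rw [show (-2 : ℝ) = ((-2 : ℤ) : ℝ) by norm_num, Real.rpow_intCast]
    simp [zpow_neg]
  have := tendsto_sum_mul_atTop_nhds_one_sub_integral₀ (𝕜 := ℂ) (fun n : ℕ ↦ χ n) h0
    (f := fun t : ℝ ↦ ((t⁻¹ : ℝ) : ℂ)) (l := 0) (g := fun t ↦ t ^ (-2 : ℝ)) ?_ ?_ ?_ ?_ ?_
  · convert this using 2
    rw [LFunction_one_eq χ hχ, zero_sub, ← integral_neg]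
    refine setIntegral_congr_fun measurableSet_Ioi fun t ht ↦ ?_
    have ht' : t ≠ 0 := by simp only [Set.mem_Ioi] at ht; linarith
    rw [(hder t ht').deriv, hIcc, show (-(1 + 1) : ℂ) = ((-2 : ℤ) : ℂ) by norm_num,
      Complex.cpow_intCast, zpow_neg]
    push_cast
    simp [mul_comm]
  · intro t ht
    simp only [Set.mem_Ici] at ht
    exact (hder t (by linarith)).differentiableAt
  · refine ContinuousOn.locallyIntegrableOn ?_ measurableSet_Ici
    have : Set.EqOn (deriv fun t : ℝ ↦ ((t⁻¹ : ℝ) : ℂ)) (fun t ↦ ((-(t ^ 2)⁻¹ : ℝ) : ℂ)) (Set.Ici 1) := by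
      intro t ht
      simp only [Set.mem_Ici] at ht
      exact (hder t (by linarith)).deriv
    refine ContinuousOn.congr ?_ this
    refine Complex.continuous_ofReal.comp_continuousOn (ContinuousOn.neg (ContinuousOn.inv₀ (by fun_prop) ?_))
    intro t ht
    simp only [Set.mem_Ici] at ht
    positivity
  · have : Tendsto (fun n : ℕ ↦ (q : ℝ) * (n : ℝ)⁻¹) atTop (𝓝 0) := by
      simpa using tendsto_inv_atTop_nhds_zero_nat (𝕜 := ℝ) |>.const_mul (q : ℝ)
    refine squeeze_zero_norm (fun n ↦ ?_) this
    rw [norm_mul, hIcc, mul_comm]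
    refine mul_le_mul (norm_sum_le_q χ hχ _) ?_ (by positivity) (by positivity)
    simp
  · refine Asymptotics.IsBigO.of_bound q ?_
    filter_upwards [eventually_gt_atTop 0] with t ht
    exact hbd t ht.ne'
  · exact ⟨Set.Ioi 1, Ioi_mem_atTop 1, (integrableOn_Ioi_rpow_iff one_pos).mpr (by norm_num)⟩

/-! ### Tent-weighted sums -/

/-- The twice summed function `∑_{n < t} (t - n) g(n)`. -/
noncomputable def rampSum (g : ℕ → ℝ) (t : ℕ) : ℝ := ∑ n ∈ range t, ((t : ℝ) - n) * g n

/-- The tent-weighted sum `∑_{n < t} min(n, t - n) g(n)` (see `tentSum_eq`), written as a combination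
of ramp sums at `t`, `⌊t/2⌋` and `⌈t/2⌉`. -/
noncomputable def tentSum (g : ℕ → ℝ) (t : ℕ) : ℝ := rampSum g t - rampSum g (t / 2) - rampSum g ((t + 1) / 2)

lemma rampSum_succ (g : ℕ → ℝ) (t : ℕ) : rampSum g (t + 1) = rampSum g t + ∑ n ∈ range (t + 1), g n := by
  have : rampSum g t = ∑ n ∈ range (t + 1), ((t : ℝ) - n) * g n := by
    rw [sum_range_succ]; simp [rampSum]
  rw [this, rampSum, ← sum_add_distrib]
  refine sum_congr rfl fun n _ ↦ ?_
  push_cast; ring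

lemma rampSum_eq_of_le (g : ℕ → ℝ) {s t : ℕ} (h : s ≤ t) :
    rampSum g s = ∑ n ∈ range t, ((s - n : ℕ) : ℝ) * g n := by
  rw [rampSum, ← sum_subset (range_subset_range.mpr h)]
  · refine sum_congr rfl fun n hn ↦ ?_
    rw [Nat.cast_sub (mem_range.mp hn).le]
  · intro n _ hn
    rw [mem_range, not_lt] at hn
    simp [Nat.sub_eq_zero_of_le hn]

lemma tentSum_eq (g : ℕ → ℝ) (t : ℕ) :
    tentSum g t = ∑ n ∈ range t, ((min n (t - n) : ℕ) : ℝ) * g n := by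
  rw [tentSum, rampSum_eq_of_le g le_rfl, rampSum_eq_of_le g (show t / 2 ≤ t by omega),
    rampSum_eq_of_le g (show (t + 1) / 2 ≤ t by omega), ← sum_sub_distrib, ← sum_sub_distrib]
  refine sum_congr rfl fun n hn ↦ ?_
  rw [mem_range] at hn
  have : t - n = min n (t - n) + (t / 2 - n) + ((t + 1) / 2 - n) := by omega
  have h : ((t - n : ℕ) : ℝ) = (min n (t - n) : ℕ) + (t / 2 - n : ℕ) + ((t + 1) / 2 - n : ℕ) := by
    rw [← Nat.cast_add, ← Nat.cast_add, ← this]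
  rw [h]; ring

lemma sum_sum_eq (g : ℕ → ℝ) (a b : ℕ) :
    ∑ k ∈ range a, ∑ l ∈ range b, g (1 + k + l) = rampSum g (a + b) - rampSum g a - rampSum g b := by
  induction a with
  | zero => simp [rampSum]
  | succ a ih =>
    have h := sum_range_add g (a + 1) b
    rw [sum_range_succ, ih, show a + 1 + b = a + b + 1 by ring, rampSum_succ, rampSum_succ,
      show a + b + 1 = a + 1 + b by ring, h, show 1 + a = a + 1 by ring]
    ring

/-- The tent weight counts the pairs `(k, l)` with `1 + k + l = n`; this brings the bilinear bound into
play. -/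
lemma tentSum_eq_sum_sum (g : ℕ → ℝ) (t : ℕ) :
    tentSum g t = ∑ k ∈ range (t / 2), ∑ l ∈ range ((t + 1) / 2), g (1 + k + l) := by
  rw [sum_sum_eq, tentSum, show t / 2 + (t + 1) / 2 = t by omega]

lemma tentSum_one (t : ℕ) : tentSum (fun _ ↦ 1) t ≤ (t : ℝ) ^ 2 / 4 := by
  rw [tentSum_eq_sum_sum]
  simp only [sum_const, card_range, nsmul_eq_mul, mul_one]
  have h : ((t / 2 : ℕ) : ℝ) + ((t + 1) / 2 : ℕ) = t := by
    rw [← Nat.cast_add, show t / 2 + (t + 1) / 2 = t by omega]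
  rw [← h]
  nlinarith [sq_nonneg (((t / 2 : ℕ) : ℝ) - ((t + 1) / 2 : ℕ))]

lemma tentSum_sub (g h : ℕ → ℝ) (t : ℕ) : tentSum (fun n ↦ g n - h n) t = tentSum g t - tentSum h t := by
  simp only [tentSum_eq, mul_sub, sum_sub_distrib]

/-! ### Summation by parts with tent-weighted sums -/

/-- The second difference of `1 / t` at `t`, used as the weight of `tentSum g t`. Division by zero makes
it vanish at `t = 0` and `t = 1`, where no term is wanted. -/
noncomputable def tentCoeff (t : ℕ) : ℝ := 2 / (((t : ℝ) - 1) * t * (t + 1))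

lemma tentCoeff_nonneg (t : ℕ) : 0 ≤ tentCoeff t := by
  rcases t with _ | t
  · simp [tentCoeff]
  · rw [tentCoeff]; push_cast; rw [add_sub_cancel_right]; positivity

lemma tentCoeff_zero : tentCoeff 0 = 0 := by simp [tentCoeff]
lemma tentCoeff_one : tentCoeff 1 = 0 := by simp [tentCoeff]
lemma tentCoeff_add_two (t : ℕ) : tentCoeff (t + 2) = 2 / (((t : ℝ) + 1) * (t + 2) * (t + 3)) := by
  rw [tentCoeff]; push_cast; congr 1; ring

/-- Summation by parts, twice, for `∑ g(k) / k`. -/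
lemma sum_tentCoeff_rampSum (g : ℕ → ℝ) (h0 : g 0 = 0) (N : ℕ) :
    ∑ t ∈ range (N + 2), tentCoeff t * rampSum g t = ∑ k ∈ Icc 0 (N + 1), (k : ℝ)⁻¹ * g k
      - (∑ n ∈ range (N + 2), g n) / (N + 1) - rampSum g (N + 1) / ((N + 1) * (N + 2)) := by
  induction N with
  | zero =>
    simp [sum_range_succ, tentCoeff_zero, tentCoeff_one, h0, rampSum, ← Nat.range_succ_eq_Icc_zero]
  | succ N ih =>
    rw [sum_range_succ, ih, sum_range_succ _ (N + 2), ← Nat.range_succ_eq_Icc_zero,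
      ← Nat.range_succ_eq_Icc_zero, sum_range_succ _ (N + 1 + 1), rampSum_succ g (N + 1), tentCoeff_add_two]
    push_cast
    field_simp
    ring

/-- Regrouping by `⌊t/2⌋` and `⌈t/2⌉`: the identity
`4 e(2 s) + 2 e(2 s + 1) + 2 e(2 s - 1) = e(s)`, with `e = tentCoeff`, turns the sums at half argument into a ramp series. -/
lemma sum_tentCoeff_tentSum (g : ℕ → ℝ) (h0 : g 0 = 0) (N : ℕ) :
    ∑ t ∈ range (2 * (N + 1) + 2), 2 * tentCoeff t * tentSum g t =
      2 * ∑ t ∈ range (2 * (N + 1) + 2), tentCoeff t * rampSum g t - ∑ t ∈ range (N + 2), tentCoeff t * rampSum g t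
        - 2 * tentCoeff (2 * N + 3) * rampSum g (N + 2) := by
  induction N with
  | zero =>
    have h1 : rampSum g 1 = g 0 := by simp [rampSum]
    have h2 : rampSum g 2 = 2 * g 0 + g 1 := by simp [rampSum, sum_range_succ]; norm_num
    have h3 : rampSum g 3 = 3 * g 0 + 2 * g 1 + g 2:= by simp [rampSum, sum_range_succ]; norm_num
    simp [sum_range_succ, tentSum, h1, h2, h3, tentCoeff, h0]
    norm_num
    ring
  | succ N ih =>
    rw [show 2 * (N + 1 + 1) + 2 = 2 * (N + 1) + 2 + 1 + 1 by ring, sum_range_succ, sum_range_succ,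
      ih, sum_range_succ _ (2 * (N + 1) + 2 + 1), sum_range_succ _ (2 * (N + 1) + 2),
      sum_range_succ _ (N + 2)]
    simp only [tentSum]
    rw [show (2 * (N + 1) + 2) / 2 = N + 2 by omega, show (2 * (N + 1) + 2 + 1) / 2 = N + 2 by omega,
      show (2 * (N + 1) + 2 + 1 + 1) / 2 = N + 3 by omega, show N + 1 + 2 = N + 3 by ring,
      show 2 * (N + 1) + 2 = (2 * N + 2) + 2 by ring, show 2 * N + 2 + 2 + 1 = (2 * N + 3) + 2 by ring,
      show 2 * (N + 1) + 3 = (2 * N + 3) + 2 by ring, show 2 * N + 3 = (2 * N + 1) + 2 by ring,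
      show 2 * N + 1 + 2 + 2 = (2 * N + 3) + 2 by ring]
    have hc : 4 * tentCoeff (2 * N + 2 + 2) + 2 * tentCoeff (2 * N + 3 + 2) + 2 * tentCoeff (2 * N + 1 + 2) = tentCoeff (N + 2) := by
      simp only [tentCoeff_add_two]
      push_cast
      field_simp
      ring
    rw [← hc]
    ring

open Filter Topology in
lemma tendsto_tentCoeff_tentSum (g : ℕ → ℝ) (h0 : g 0 = 0) (Q ℓ : ℝ)
    (hQ : ∀ n, |∑ k ∈ range n, g k| ≤ Q)
    (h : Tendsto (fun n : ℕ ↦ ∑ k ∈ Icc 0 n, (k : ℝ)⁻¹ * g k) atTop (𝓝 ℓ)) :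
    Tendsto (fun N : ℕ ↦ ∑ t ∈ range (2 * (N + 1) + 2), 2 * tentCoeff t * tentSum g t) atTop (𝓝 ℓ) := by
  have hS2 : ∀ n : ℕ, |rampSum g n| ≤ Q * n := by
    intro n
    induction n with
    | zero => simp [rampSum]
    | succ n ih =>
      rw [rampSum_succ]
      refine (abs_add_le _ _).trans ?_
      push_cast
      linarith [hQ (n + 1)]
  have hQ0 : 0 ≤ Q := (abs_nonneg _).trans (hQ 0)
  have hlim : Tendsto (fun n : ℕ ↦ Q * ((n : ℝ) + 1)⁻¹) atTop (𝓝 0) := by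
    have := (tendsto_one_div_add_atTop_nhds_zero_nat (𝕜 := ℝ)).const_mul Q
    simpa using this
  have hT : Tendsto (fun N : ℕ ↦ ∑ t ∈ range (N + 2), tentCoeff t * rampSum g t) atTop (𝓝 ℓ) := by
    simp only [sum_tentCoeff_rampSum g h0]
    have h1 : Tendsto (fun N : ℕ ↦ (∑ n ∈ range (N + 2), g n) / ((N : ℝ) + 1)) atTop (𝓝 0) := by
      refine squeeze_zero_norm (fun N ↦ ?_) hlim
      rw [norm_div, Real.norm_eq_abs, div_eq_mul_inv, Real.norm_of_nonneg (by positivity)]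
      exact mul_le_mul_of_nonneg_right (hQ _) (by positivity)
    have h2 : Tendsto (fun N : ℕ ↦ rampSum g (N + 1) / (((N : ℝ) + 1) * (N + 2))) atTop (𝓝 0) := by
      refine squeeze_zero_norm (fun N ↦ ?_) hlim
      rw [norm_div, Real.norm_eq_abs, Real.norm_of_nonneg (by positivity), div_le_iff₀ (by positivity)]
      refine (hS2 _).trans ?_
      push_cast
      field_simp
      nlinarith
    have h3 := (((tendsto_add_atTop_iff_nat 1).mpr h).sub h1).sub h2
    simpa using h3
  have hT2 := hT.comp (tendsto_atTop_mono (f := id) (g := fun N ↦ 2 * (N + 1))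
    (fun n ↦ by simp only [id]; omega) tendsto_id)
  have h4 : Tendsto (fun N : ℕ ↦ 2 * tentCoeff (2 * N + 3) * rampSum g (N + 2)) atTop (𝓝 0) := by
    refine squeeze_zero_norm (fun N ↦ ?_) hlim
    rw [norm_mul, Real.norm_eq_abs, Real.norm_eq_abs, show 2 * N + 3 = (2 * N + 1) + 2 by ring,
      tentCoeff_add_two, abs_of_nonneg (by positivity)]
    refine (mul_le_mul_of_nonneg_left (hS2 _) (by positivity)).trans ?_
    push_cast
    rw [mul_left_comm]
    refine mul_le_mul_of_nonneg_left ?_ hQ0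
    field_simp
    ring_nf
    nlinarith
  have := ((hT2.const_mul 2).sub hT).sub h4
  simp only [sum_tentCoeff_tentSum g h0]
  rw [show 2 * ℓ - ℓ - 0 = ℓ by ring] at this
  exact this

/-! ### The upper bound with a saving term -/

lemma sum_tail (m K : ℕ) (hm : 1 ≤ m) :
    ∑ i ∈ range K, tentCoeff (m + 1 + i) * (m + 1 + i : ℕ) =
      1 / (m : ℝ) + 1 / (m + 1) - 1 / (m + K) - 1 / (m + K + 1) := by
  have hm' : (0 : ℝ) < m := by exact_mod_cast hm
  induction K with
  | zero => simp
  | succ K ih =>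
    rw [sum_range_succ, ih, tentCoeff]
    push_cast
    rw [show (m : ℝ) + 1 + K - 1 = m + K by ring]
    field_simp
    ring

lemma sum_main (n : ℕ) :
    ∑ t ∈ range (n + 2), 2 * tentCoeff t * ((t : ℝ) ^ 2 / 4) =
      (harmonic (n + 1) : ℝ) - 3 / 4 - 1 / 2 * (1 / (n + 1) - 1 / (n + 2)) := by
  induction n with
  | zero => simp [sum_range_succ, tentCoeff_zero, tentCoeff_one]; norm_num
  | succ n ih =>
    rw [sum_range_succ, ih, harmonic_succ (n + 1), tentCoeff_add_two]
    push_cast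
    field_simp
    ring

lemma harmonic_le (T : ℕ) (hT : 64 ≤ T) : (harmonic T : ℝ) ≤ Real.log T + 0.586 := by
  have h := Real.strictAnti_eulerMascheroniSeq'.antitone hT
  have hT0 : T ≠ 0 := by omega
  simp only [Real.eulerMascheroniSeq', hT0, if_false, show (64 : ℕ) ≠ 0 by norm_num] at h
  -- `harmonic n - log n` decreases, so its value at `64` bounds it from there on
  have h1 : ((harmonic 64 : ℚ) : ℝ) ≤ 4.744 := by
    have : harmonic 64 ≤ 4.744 := by
      simp only [harmonic, sum_range_succ, sum_range_zero]
      norm_num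
    have h2 : ((harmonic 64 : ℚ) : ℝ) ≤ ((4.744 : ℚ) : ℝ) := by exact_mod_cast this
    norm_num at h2 ⊢
  have h2 : Real.log ((64 : ℕ) : ℝ) = 6 * Real.log 2 := by
    rw [show (((64 : ℕ) : ℝ)) = 2 ^ 6 by norm_num, Real.log_pow]; norm_num
  have := Real.log_two_gt_d9
  rw [h2] at h
  linarith

/-- The total weight of `n` in the partial sum over `t ≤ n + j` of
`2 * tentCoeff t * tentSum g t`, as long as `t ≤ 2 n`. -/
lemma kernel_small (n j : ℕ) (hn : 1 ≤ n) (hj : j ≤ n) :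
    ∑ t ∈ range (n + j + 1), 2 * tentCoeff t * ((min n (t - n) : ℕ) : ℝ) =
      2 * (1 / (n : ℝ) - 1 / (n + j) - j / ((n + j) * (n + j + 1))) := by
  have hn' : (0 : ℝ) < n := by exact_mod_cast hn
  induction j with
  | zero =>
    rw [sum_eq_zero]
    · simp
    · intro t ht
      rw [mem_range] at ht
      rw [show min n (t - n) = 0 by omega]
      simp
  | succ j ih =>
    rw [← add_assoc, sum_range_succ, ih (by omega), show min n (n + j + 1 - n) = j + 1 by omega, tentCoeff]
    push_cast
    rw [show (n : ℝ) + j + 1 - 1 = n + j by ring]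
    field_simp
    ring

/-- The total weight of `n` once `t` has passed `2 n`: it approaches `1 / n`. -/
lemma kernel_large (n i : ℕ) (hn : 1 ≤ n) :
    ∑ t ∈ range (2 * n + i + 1), 2 * tentCoeff t * ((min n (t - n) : ℕ) : ℝ) =
      1 / (n : ℝ) - 2 * n / ((2 * n + i) * (2 * n + i + 1)) := by
  have hn' : (0 : ℝ) < n := by exact_mod_cast hn
  induction i with
  | zero =>
    have := kernel_small n n hn le_rfl
    rw [show 2 * n + 0 + 1 = n + n + 1 by ring, this]
    push_cast
    field_simp
    ring
  | succ i ih =>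
    rw [← add_assoc, sum_range_succ, ih, show min n (2 * n + i + 1 - n) = n by omega, tentCoeff]
    push_cast
    rw [show 2 * (n : ℝ) + i + 1 - 1 = 2 * n + i by ring]
    field_simp
    ring

lemma V_lower (F : ℕ → ℝ) (hF : ∀ n, 0 ≤ F n) (Y : ℕ) :
    ∑ n ∈ Icc 1 Y, F n * (1 / (n : ℝ) - n / (2 * (Y : ℝ) ^ 2)) ≤
      ∑ t ∈ range (2 * Y + 1), 2 * tentCoeff t * tentSum F t := by
  have h : ∀ t ∈ range (2 * Y + 1), 2 * tentCoeff t * tentSum F t =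
      ∑ n ∈ range (2 * Y + 1), F n * (2 * tentCoeff t * ((min n (t - n) : ℕ) : ℝ)) := by
    intro t ht
    rw [mem_range] at ht
    rw [tentSum_eq, mul_sum, ← sum_subset (range_subset_range.mpr ht.le)]
    · exact sum_congr rfl fun n _ ↦ by ring
    · intro n _ hn
      rw [mem_range, not_lt] at hn
      simp [Nat.sub_eq_zero_of_le hn]
  rw [sum_congr rfl h, sum_comm]
  have hsub : Icc 1 Y ⊆ range (2 * Y + 1) := by
    intro n hn
    rw [mem_Icc] at hn
    rw [mem_range]; omega
  refine le_trans (sum_le_sum fun n hn ↦ ?_) (sum_le_sum_of_subset_of_nonneg hsub fun n _ _ ↦ ?_)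
  · rw [mem_Icc] at hn
    rw [← mul_sum]
    refine mul_le_mul_of_nonneg_left ?_ (hF n)
    have hk := kernel_large n (2 * Y - 2 * n) hn.1
    rw [show 2 * n + (2 * Y - 2 * n) + 1 = 2 * Y + 1 by omega] at hk
    rw [hk]
    have hc : 2 * (n : ℝ) + ((2 * Y - 2 * n : ℕ) : ℝ) = 2 * Y := by
      have : 2 * n + (2 * Y - 2 * n) = 2 * Y := by omega
      exact_mod_cast this
    rw [hc]
    have hY : (0 : ℝ) < Y := by
      have : 0 < Y := by omega
      exact_mod_cast this
    have : 2 * (n : ℝ) / (2 * Y * (2 * Y + 1)) ≤ n / (2 * (Y : ℝ) ^ 2) := by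
      rw [div_le_div_iff₀ (by positivity) (by positivity)]
      have hn0 : (0 : ℝ) ≤ n := by positivity
      have : 0 ≤ (n : ℝ) * Y := by positivity
      nlinarith
    linarith
  · exact sum_nonneg fun t _ ↦ mul_nonneg (hF n)
      (mul_nonneg (mul_nonneg zero_le_two (tentCoeff_nonneg t)) (Nat.cast_nonneg _))

/-- Partial sums of the tent series for `1 - F`: the terms with `t ≤ 2 Y` are estimated by comparison
with the constant function `1`, the others by the hypothesis `hD`. -/
lemma partial_le (F : ℕ → ℝ) (hF : ∀ n, 0 ≤ F n) (Y : ℕ) (hY : 32 ≤ Y)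
    (hD : ∀ t, tentSum (fun n ↦ 1 - F n) t ≤ Y * t / 2) (R : ℕ) (hR : 2 * Y + 1 ≤ R) :
    ∑ t ∈ range R, 2 * tentCoeff t * tentSum (fun n ↦ 1 - F n) t ≤
      Real.log Y + 1.5292 - ∑ n ∈ Icc 1 Y, F n * (1 / (n : ℝ) - n / (2 * (Y : ℝ) ^ 2)) := by
  have hY0 : (0 : ℝ) < Y := by
    have : 0 < Y := by omega
    exact_mod_cast this
  obtain ⟨K, rfl⟩ := Nat.exists_eq_add_of_le hR
  rw [sum_range_add]
  have h1 : ∑ t ∈ range (2 * Y + 1), 2 * tentCoeff t * tentSum (fun n ↦ 1 - F n) t ≤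
      ∑ t ∈ range (2 * Y + 1), 2 * tentCoeff t * ((t : ℝ) ^ 2 / 4) -
      ∑ t ∈ range (2 * Y + 1), 2 * tentCoeff t * tentSum F t := by
    rw [← sum_sub_distrib]
    refine sum_le_sum fun t _ ↦ ?_
    rw [← mul_sub, tentSum_sub (fun _ ↦ 1)]
    exact mul_le_mul_of_nonneg_left (by linarith [tentSum_one t]) (by linarith [tentCoeff_nonneg t])
  have h2 : ∑ i ∈ range K, 2 * tentCoeff (2 * Y + 1 + i) * tentSum (fun n ↦ 1 - F n) (2 * Y + 1 + i) ≤ 1 := by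
    have : ∀ i ∈ range K, 2 * tentCoeff (2 * Y + 1 + i) * tentSum (fun n ↦ 1 - F n) (2 * Y + 1 + i) ≤
        Y * (tentCoeff (2 * Y + 1 + i) * (2 * Y + 1 + i : ℕ)) := by
      intro i _
      have := mul_le_mul_of_nonneg_left (hD (2 * Y + 1 + i)) (tentCoeff_nonneg (2 * Y + 1 + i))
      linarith
    refine (sum_le_sum this).trans ?_
    rw [← mul_sum, sum_tail (2 * Y) K (by omega)]
    push_cast
    have h3 : 0 ≤ 1 / (2 * (Y : ℝ) + K) := by positivity
    have h4 : 0 ≤ 1 / (2 * (Y : ℝ) + K + 1) := by positivity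
    have h5 : 1 / (2 * (Y : ℝ) + 1) ≤ 1 / (2 * Y) := by gcongr; linarith
    calc (Y : ℝ) * _ ≤ Y * (1 / (2 * Y) + 1 / (2 * Y)) := by gcongr; linarith
      _ = 1 := by field_simp; norm_num
  have h3 : ∑ t ∈ range (2 * Y + 1), 2 * tentCoeff t * ((t : ℝ) ^ 2 / 4) ≤ Real.log Y + 0.5292 := by
    obtain ⟨n, hn⟩ : ∃ n, 2 * Y = n + 1 := ⟨2 * Y - 1, by omega⟩
    rw [hn, sum_main, ← hn]
    have h6 := harmonic_le (2 * Y) (by omega)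
    push_cast at h6
    rw [Real.log_mul (by norm_num) hY0.ne'] at h6
    have := Real.log_two_lt_d9
    have h7 : 1 / ((n : ℝ) + 2) ≤ 1 / (n + 1) := by gcongr; linarith
    linarith
  linarith [V_lower F hF Y]

/-! ### Tent-weighted divisor sums and the Mertens estimate -/

/-- The indicator function of the multiples of `d`. -/
def dvdInd (d n : ℕ) : ℝ := if d ∣ n then 1 else 0

lemma sum_dvdInd (d t : ℕ) : ∑ n ∈ range (t + 1), dvdInd d n = (t / d : ℕ) + 1 := by
  induction t with
  | zero => rw [sum_range_one]; simp [dvdInd]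
  | succ t ih =>
    rw [sum_range_succ, ih, Nat.succ_div, dvdInd]
    split_ifs <;> push_cast <;> ring

lemma rampSum_dvdInd (d t : ℕ) :
    2 * rampSum (dvdInd d) t = ((t / d : ℕ) + 1) * (2 * t - d * (t / d : ℕ)) := by
  induction t with
  | zero => simp [rampSum]
  | succ t ih =>
    rw [rampSum_succ, mul_add, ih, sum_dvdInd, Nat.succ_div]
    split_ifs with h
    · have h1 : t + 1 = d * (t / d + 1) := by
        have := Nat.succ_div_of_dvd h
        rw [← this, Nat.mul_div_cancel' h]
      have h2 : (t : ℝ) + 1 = d * ((t / d : ℕ) + 1) := by exact_mod_cast h1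
      push_cast
      linear_combination (-2) * h2
    · push_cast
      ring

lemma rampSum_dvdInd_bounds (d t : ℕ) (hd : 1 ≤ d) :
    (t : ℝ) ^ 2 / d + t ≤ 2 * rampSum (dvdInd d) t ∧ 2 * rampSum (dvdInd d) t ≤ (t : ℝ) ^ 2 / d + t + d / 4 := by
  have hd' : (0 : ℝ) < d := by exact_mod_cast hd
  have h : (t : ℝ) = d * (t / d : ℕ) + (t % d : ℕ) := by exact_mod_cast (Nat.div_add_mod t d).symm
  have hr : ((t % d : ℕ) : ℝ) ≤ d := by exact_mod_cast (Nat.mod_lt t hd).le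
  have hr0 : (0 : ℝ) ≤ (t % d : ℕ) := by positivity
  rw [rampSum_dvdInd]
  set k : ℝ := ((t / d : ℕ) : ℝ)
  set r : ℝ := ((t % d : ℕ) : ℝ)
  have e1 : (k + 1) * (2 * t - d * k) = (t : ℝ) ^ 2 / d + t + r * (d - r) / d := by
    rw [h]; field_simp; ring
  rw [e1]
  constructor
  · have : 0 ≤ r * (d - r) / d := div_nonneg (mul_nonneg hr0 (by linarith)) hd'.le
    linarith
  · have : r * (d - r) / d ≤ d / 4 := by
      rw [div_le_iff₀ hd']
      nlinarith [sq_nonneg (d - 2 * r)]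
    linarith

lemma tentSum_two_mul (g : ℕ → ℝ) (E : ℕ) : tentSum g (2 * E) = rampSum g (2 * E) - 2 * rampSum g E := by
  rw [tentSum, show 2 * E / 2 = E by omega, show (2 * E + 1) / 2 = E by omega]; ring

lemma tentSum_dvdInd_bounds (d E : ℕ) (hd : 1 ≤ d) :
    (E : ℝ) ^ 2 / d - d / 4 ≤ tentSum (dvdInd d) (2 * E) ∧ tentSum (dvdInd d) (2 * E) ≤ (E : ℝ) ^ 2 / d + d / 8 := by
  have h1 := rampSum_dvdInd_bounds d E hd
  have h2 := rampSum_dvdInd_bounds d (2 * E) hd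
  rw [tentSum_two_mul]
  push_cast at h2
  have : (2 * (E : ℝ)) ^ 2 / d = 4 * ((E : ℝ) ^ 2 / d) := by ring
  rw [this] at h2
  constructor <;> linarith

lemma rampSum_one (t : ℕ) : rampSum (fun _ ↦ 1) t = t * (t + 1) / 2 := by
  induction t with
  | zero => simp [rampSum]
  | succ t ih => rw [rampSum_succ, ih]; simp; ring

lemma rampSum_id (t : ℕ) : rampSum (fun n ↦ n) t = ((t : ℝ) ^ 3 - t) / 6 := by
  induction t with
  | zero => simp [rampSum]
  | succ t ih =>
    have : ∑ n ∈ range (t + 1), (n : ℝ) = t * (t + 1) / 2 := by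
      have := Finset.sum_range_id_mul_two (t + 1)
      rw [Nat.add_sub_cancel] at this
      have h : ((∑ n ∈ range (t + 1), n : ℕ) : ℝ) * 2 = (t + 1) * t := by exact_mod_cast this
      rw [Nat.cast_sum] at h
      linarith
    rw [rampSum_succ, ih, this]; push_cast; ring

lemma tentSum_one_two_mul (E : ℕ) : tentSum (fun _ ↦ 1) (2 * E) = (E : ℝ) ^ 2 := by
  rw [tentSum_two_mul, rampSum_one, rampSum_one]; push_cast; ring

lemma tentSum_id_two_mul (E : ℕ) : tentSum (fun n ↦ n) (2 * E) = (E : ℝ) ^ 3 := by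
  rw [tentSum_two_mul, rampSum_id, rampSum_id]; push_cast; ring

lemma tentSum_mono (g h : ℕ → ℝ) (t : ℕ) (hgh : ∀ n, 0 < n → g n ≤ h n) : tentSum g t ≤ tentSum h t := by
  rw [tentSum_eq, tentSum_eq]
  refine sum_le_sum fun n _ ↦ ?_
  rcases Nat.eq_zero_or_pos n with rfl | hn
  · simp
  · exact mul_le_mul_of_nonneg_left (hgh n hn) (by positivity)

/-- Interchange of summation; the weight must vanish at `0`, which has no divisors in `Nat.divisors`. -/
lemma sum_divisors_swap (w c : ℕ → ℝ) (hw : w 0 = 0) (N : ℕ) :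
    ∑ n ∈ range N, w n * ∑ d ∈ n.divisors, c d =
      ∑ d ∈ range N, c d * ∑ n ∈ range N, w n * dvdInd d n := by
  have : ∀ n ∈ range N, w n * ∑ d ∈ n.divisors, c d = ∑ d ∈ range N, c d * (w n * dvdInd d n) := by
    intro n hn
    rw [mem_range] at hn
    rcases Nat.eq_zero_or_pos n with rfl | hn0
    · simp [hw]
    · have : n.divisors = (range N).filter (· ∣ n) := by
        ext d
        simp only [Nat.mem_divisors, mem_filter, mem_range]
        constructor
        · rintro ⟨h, _⟩
          exact ⟨(Nat.le_of_dvd hn0 h).trans_lt hn, h⟩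
        · rintro ⟨_, h⟩
          exact ⟨h, hn0.ne'⟩
      rw [this, sum_filter, mul_sum]
      refine sum_congr rfl fun d _ ↦ ?_
      rw [dvdInd]
      split_ifs <;> ring
  rw [sum_congr rfl this, sum_comm]
  exact sum_congr rfl fun d _ ↦ (mul_sum ..).symm

lemma tentSum_divisors (c : ℕ → ℝ) (N : ℕ) :
    tentSum (fun n ↦ ∑ d ∈ n.divisors, c d) N = ∑ d ∈ range N, c d * tentSum (dvdInd d) N := by
  simp only [tentSum_eq]
  exact sum_divisors_swap _ _ (by simp) N

open ArithmeticFunction in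
/-- The tent-weighted form of `∑ Λ(d) ⌊x/d⌋ = log ⌊x⌋!`, where the logarithm is bounded by its tangent
at `E`. -/
lemma tentSum_log (E : ℕ) (hE : 1 ≤ E) :
    ∑ d ∈ range (2 * E), vonMangoldt d * tentSum (dvdInd d) (2 * E) ≤ (E : ℝ) ^ 2 * Real.log E := by
  have hE' : (0 : ℝ) < E := by exact_mod_cast hE
  rw [← tentSum_divisors]
  simp only [vonMangoldt_sum]
  have h : ∀ n : ℕ, 0 < n → Real.log n ≤ 1 * (Real.log E - 1) + n * (1 / E) := by
    intro n hn
    have hn' : (0 : ℝ) < n := by exact_mod_cast hn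
    have := Real.log_le_sub_one_of_pos (div_pos hn' hE')
    rw [Real.log_div hn'.ne' hE'.ne'] at this
    rw [mul_one_div]; linarith
  refine (tentSum_mono _ _ _ h).trans (le_of_eq ?_)
  have e1 : tentSum (fun n : ℕ ↦ 1 * (Real.log E - 1) + n * (1 / E)) (2 * E) =
      tentSum (fun _ ↦ 1) (2 * E) * (Real.log E - 1) + tentSum (fun n ↦ n) (2 * E) * (1 / E) := by
    simp only [tentSum_eq, sum_mul, ← sum_add_distrib]
    exact sum_congr rfl fun n _ ↦ by ring
  rw [e1, tentSum_one_two_mul, tentSum_id_two_mul]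
  field_simp
  ring

open ArithmeticFunction in
/-- The lower half of the first theorem of Mertens, from Stirling's formula. -/
lemma mertens (z : ℕ) (hz : 1 ≤ z) : Real.log z - 1 ≤ ∑ m ∈ range (z + 1), vonMangoldt m / m := by
  have hz' : (0 : ℝ) < z := by exact_mod_cast hz
  have h1 : ∑ n ∈ range (z + 1), Real.log n = Real.log (z.factorial) := by
    clear hz hz'
    induction z with
    | zero => simp
    | succ z ih =>
      rw [sum_range_succ, ih, Nat.factorial_succ, Nat.cast_mul, Real.log_mul (by positivity)
        (by positivity)]
      ring
  have h2 := Stirling.le_log_factorial_stirling (n := z) (by omega)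
  have h3 : 0 ≤ Real.log z := Real.log_natCast_nonneg z
  have h4 : 0 ≤ Real.log (2 * Real.pi) := Real.log_nonneg (by linarith [Real.pi_gt_three])
  have h5 := sum_divisors_swap (fun n ↦ if n = 0 then 0 else 1) (fun d ↦ vonMangoldt d) (by simp)
    (z + 1)
  simp only [vonMangoldt_sum] at h5
  have h6 : ∑ n ∈ range (z + 1), (if n = 0 then 0 else 1) * Real.log n =
      ∑ n ∈ range (z + 1), Real.log n := by
    refine sum_congr rfl fun n _ ↦ ?_
    split_ifs with h <;> simp [h]
  rw [h6, h1] at h5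
  have h7 : ∀ d ∈ range (z + 1), vonMangoldt d * ∑ n ∈ range (z + 1),
      (if n = 0 then 0 else 1) * dvdInd d n ≤ vonMangoldt d / d * z := by
    intro d _
    have : ∑ n ∈ range (z + 1), (if n = 0 then 0 else 1) * dvdInd d n = (z / d : ℕ) := by
      have := sum_dvdInd d z
      rw [sum_range_succ'] at this ⊢
      simp [dvdInd] at this ⊢
      exact this
    rw [this, div_mul_eq_mul_div, mul_div_assoc]
    exact mul_le_mul_of_nonneg_left Nat.cast_div_le vonMangoldt_nonneg
  have h8 := sum_le_sum h7
  rw [← sum_mul, ← h5] at h8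
  have h9 : (Real.log z - 1) * z ≤ (∑ m ∈ range (z + 1), vonMangoldt m / m) * z := by
    linarith
  exact le_of_mul_le_mul_right h9 hz'

/-! ### Primes at which the character is not one -/

/-- The restriction of `F` to the primes, extended by zero. -/
noncomputable def onPrimes (F : ℕ → ℝ) (n : ℕ) : ℝ := if n.Prime then F n else 0

lemma onPrimes_nonneg (F : ℕ → ℝ) (hF : ∀ n, 0 ≤ F n) (n : ℕ) : 0 ≤ onPrimes F n := by
  rw [onPrimes]; split_ifs
  · exact hF n
  · exact le_rfl

lemma le_sum_onPrimes (F : ℕ → ℝ) (h1 : F 1 = 0)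
    (hmul : ∀ m n, F (m * n) ≤ F m + F n) (hpow : ∀ m k, F (m ^ (k + 1)) ≤ F m) (n : ℕ)
    (hn : 0 < n) : F n ≤ ∑ d ∈ n.divisors, onPrimes F d := by
  have key : ∀ n : ℕ, 0 < n → F n ≤ ∑ p ∈ n.primeFactors, F p := by
    intro n
    induction n using Nat.recOnPosPrimePosCoprime with
    | prime_pow p k hp hk =>
      intro _
      rw [Nat.primeFactors_prime_pow hk.ne' hp, sum_singleton]
      obtain ⟨j, rfl⟩ := Nat.exists_eq_add_of_le' hk
      exact hpow p j
    | zero => intro h; omega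
    | one => intro _; simp [h1]
    | coprime a b ha hb hab iha ihb =>
      intro _
      rw [hab.primeFactors_mul, sum_union hab.disjoint_primeFactors]
      exact (hmul a b).trans (add_le_add (iha (by omega)) (ihb (by omega)))
  refine (key n hn).trans (le_of_eq ?_)
  have : n.primeFactors = n.divisors.filter Nat.Prime := by
    ext p
    simp only [Nat.mem_primeFactors, mem_filter, Nat.mem_divisors]
    tauto
  rw [this, sum_filter]
  rfl

open ArithmeticFunction in
/-- Smallness of the tent-weighted sums of `1 - F` forces `F` to be large on the primes up to `z`. At
`t = 26 Y` the hypothesis `hD` says that the tent sum of `F` is at least `12/13` of that of `1`. The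
primes beyond `z` can account for only part of this, by the Mertens estimate and `F ≤ 2`. -/
lemma sum_onPrimes_lower (F : ℕ → ℝ) (hF : ∀ n, 0 ≤ F n) (hF2 : ∀ n, F n ≤ 2) (h1 : F 1 = 0)
    (hmul : ∀ m n, F (m * n) ≤ F m + F n) (hpow : ∀ m k, F (m ^ (k + 1)) ≤ F m) (Y : ℕ)
    (hD : ∀ t, tentSum (fun n ↦ 1 - F n) t ≤ Y * t / 2) (z : ℕ) (hz : 2 ≤ z) (hzY : z ≤ Y) :
    12 / 13 - 2 * (Real.log (13 * Y) - Real.log z + 1.008) / Real.log z ≤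
      (∑ p ∈ range (z + 1), onPrimes F p / p) * (1353 / 1352) := by
  have hz' : (2 : ℝ) ≤ z := by exact_mod_cast hz
  have hzY' : (z : ℝ) ≤ Y := by exact_mod_cast hzY
  have hlz : 0 < Real.log z := Real.log_pos (by linarith)
  obtain ⟨E, hE⟩ : ∃ E, E = 13 * Y := ⟨_, rfl⟩
  have hE' : (E : ℝ) = 13 * Y := by rw [hE]; push_cast; ring
  have hE0 : (0 : ℝ) < E := by linarith
  obtain ⟨K, hK⟩ : ∃ K, 2 * E = z + 1 + K := ⟨2 * E - (z + 1), by omega⟩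
  have hWlow : ∀ d, 1 ≤ d → (E : ℝ) ^ 2 / d - d / 4 ≤ tentSum (dvdInd d) (2 * E) :=
    fun d hd ↦ (tentSum_dvdInd_bounds d E hd).1
  have hW0 : ∀ d, 0 ≤ tentSum (dvdInd d) (2 * E) := by
    intro d
    rw [tentSum_eq]
    refine sum_nonneg fun n _ ↦ mul_nonneg (by positivity) ?_
    rw [dvdInd]; split_ifs <;> norm_num
  -- the weighted sum of `F` is large because the weighted sum of `1 - F` is small
  have hlow : (E : ℝ) ^ 2 * (12 / 13) ≤ tentSum F (2 * E) := by
    have h2 := hD (2 * E)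
    rw [tentSum_sub (fun _ ↦ 1), tentSum_one_two_mul] at h2
    push_cast at h2
    have : (Y : ℝ) = E / 13 := by rw [hE']; ring
    rw [this] at h2
    nlinarith
  have hup : tentSum F (2 * E) ≤ ∑ d ∈ range (2 * E), onPrimes F d * tentSum (dvdInd d) (2 * E) := by
    rw [← tentSum_divisors]
    exact tentSum_mono _ _ _ fun n hn ↦ le_sum_onPrimes F h1 hmul hpow n hn
  have hlog := tentSum_log E (by omega)
  rw [hK, sum_range_add, ← hK] at hup hlog
  -- for `d ≤ z ≤ E / 13` the error `d / 8` is at most `1 / 1352` of the main term `E ^ 2 / d`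
  have hsmall : ∑ d ∈ range (z + 1), onPrimes F d * tentSum (dvdInd d) (2 * E) ≤
      (E : ℝ) ^ 2 * ((∑ p ∈ range (z + 1), onPrimes F p / p) * (1353 / 1352)) := by
    rw [sum_mul, mul_sum]
    refine sum_le_sum fun d hd ↦ ?_
    rw [mem_range] at hd
    rcases Nat.eq_zero_or_pos d with rfl | hd0
    · simp [onPrimes, Nat.not_prime_zero]
    have hd' : (0 : ℝ) < d := by exact_mod_cast hd0
    have hdY : (d : ℝ) ≤ E / 13 := by
      have : (d : ℝ) ≤ z := by exact_mod_cast (by omega : d ≤ z)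
      linarith
    have hW : tentSum (dvdInd d) (2 * E) ≤ (E : ℝ) ^ 2 / d * (1353 / 1352) := by
      refine (tentSum_dvdInd_bounds d E hd0).2.trans ?_
      have : (d : ℝ) / 8 ≤ (E : ℝ) ^ 2 / d * (1 / 1352) := by
        rw [div_mul_eq_mul_div, div_le_div_iff₀ (by norm_num) hd']
        nlinarith
      linarith
    calc _ ≤ onPrimes F d * ((E : ℝ) ^ 2 / d * (1353 / 1352)) :=
          mul_le_mul_of_nonneg_left hW (onPrimes_nonneg F hF d)
      _ = _ := by ring
  -- for a prime `p > z` one has `F p ≤ 2 ≤ (2 / log z) Λ(p)`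
  have hlarge : ∑ i ∈ range K, onPrimes F (z + 1 + i) * tentSum (dvdInd (z + 1 + i)) (2 * E) ≤
      2 / Real.log z * ∑ i ∈ range K, vonMangoldt (z + 1 + i) * tentSum (dvdInd (z + 1 + i)) (2 * E) := by
    rw [mul_sum]
    refine sum_le_sum fun i _ ↦ ?_
    rw [← mul_assoc]
    refine mul_le_mul_of_nonneg_right ?_ (hW0 _)
    rw [onPrimes]
    split_ifs with hp
    · rw [vonMangoldt_apply_prime hp]
      have : Real.log z ≤ Real.log (z + 1 + i : ℕ) := by
        refine Real.log_le_log (by linarith) ?_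
        push_cast
        have : (0 : ℝ) ≤ i := by positivity
        linarith
      calc F (z + 1 + i) ≤ 2 / Real.log z * Real.log z := by
            rw [div_mul_cancel₀ _ hlz.ne']; exact hF2 _
        _ ≤ _ := by gcongr
    · exact mul_nonneg (by positivity) vonMangoldt_nonneg
  have hmert : (E : ℝ) ^ 2 * (Real.log z - 1.008) ≤
      ∑ d ∈ range (z + 1), vonMangoldt d * tentSum (dvdInd d) (2 * E) := by
    have h2 : (E : ℝ) ^ 2 * (∑ d ∈ range (z + 1), vonMangoldt d / d) -
        z / 4 * ∑ d ∈ range (z + 1), vonMangoldt d ≤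
        ∑ d ∈ range (z + 1), vonMangoldt d * tentSum (dvdInd d) (2 * E) := by
      rw [mul_sum, mul_sum, ← sum_sub_distrib]
      refine sum_le_sum fun d hd ↦ ?_
      rw [mem_range] at hd
      rcases Nat.eq_zero_or_pos d with rfl | hd0
      · simp
      have hdz : (d : ℝ) ≤ z := by exact_mod_cast (by omega : d ≤ z)
      have h3 := mul_le_mul_of_nonneg_left (hWlow d hd0) (vonMangoldt_nonneg (n := d))
      have h4 := mul_le_mul_of_nonneg_right hdz (vonMangoldt_nonneg (n := d))
      have h5 : (E : ℝ) ^ 2 * (vonMangoldt d / d) = vonMangoldt d * ((E : ℝ) ^ 2 / d) := by ring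
      rw [h5]
      linarith
    have hpsi : ∑ d ∈ range (z + 1), vonMangoldt d ≤ (Real.log 4 + 4) * z := by
      have := Chebyshev.psi_le_const_mul_self (x := z) (by linarith)
      rwa [Chebyshev.psi_eq_sum_Icc, Nat.floor_natCast, ← Nat.range_succ_eq_Icc_zero] at this
    have hl4 : Real.log 4 ≤ 1.3863 := by
      rw [show (4 : ℝ) = 2 ^ 2 by norm_num, Real.log_pow]
      have := Real.log_two_lt_d9
      push_cast; linarith
    have h3 := mul_le_mul_of_nonneg_left (mertens z (by omega)) (sq_nonneg (E : ℝ))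
    have h4 : (z : ℝ) / 4 * ∑ d ∈ range (z + 1), vonMangoldt d ≤ 0.008 * (E : ℝ) ^ 2 := by
      calc _ ≤ (z : ℝ) / 4 * ((1.3863 + 4) * z) := by gcongr; exact hpsi.trans (by gcongr)
        _ ≤ _ := by
          have : (z : ℝ) ^ 2 ≤ (E / 13) ^ 2 := by gcongr; linarith
          nlinarith
    linarith
  have hlarge2 : ∑ i ∈ range K, onPrimes F (z + 1 + i) * tentSum (dvdInd (z + 1 + i)) (2 * E) ≤
      2 / Real.log z * ((E : ℝ) ^ 2 * (Real.log E - Real.log z + 1.008)) :=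
    hlarge.trans (mul_le_mul_of_nonneg_left (by linarith) (by positivity))
  have hfin : (E : ℝ) ^ 2 * (12 / 13 - 2 * (Real.log (13 * Y) - Real.log z + 1.008) / Real.log z) ≤
      (E : ℝ) ^ 2 * ((∑ p ∈ range (z + 1), onPrimes F p / p) * (1353 / 1352)) := by
    have : (E : ℝ) ^ 2 * (12 / 13 - 2 * (Real.log (13 * Y) - Real.log z + 1.008) / Real.log z) =
        (E : ℝ) ^ 2 * (12 / 13) -
          2 / Real.log z * ((E : ℝ) ^ 2 * (Real.log E - Real.log z + 1.008)) := by
      rw [hE']; ring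
    rw [this]
    linarith
  exact le_of_mul_le_mul_left hfin (by positivity)

/-! ### Lower bounds for the saving term -/

/-- The weight of `F n` in the saving term. -/
noncomputable def kern (Y n : ℕ) : ℝ := 1 / (n : ℝ) - n / (2 * (Y : ℝ) ^ 2)

lemma kern_nonneg (Y n : ℕ) (h1 : 1 ≤ n) (hn : n ≤ Y) : 0 ≤ kern Y n := by
  have h1' : (1 : ℝ) ≤ n := by exact_mod_cast h1
  have hn' : (n : ℝ) ≤ Y := by exact_mod_cast hn
  rw [kern, sub_nonneg, div_le_div_iff₀ (by nlinarith) (by linarith)]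
  nlinarith

/-- A step function minorant of `1 - u² / 2` at `u = m p / Y`, with steps at `u = 1/4` and `u = 1/2`. -/
lemma kern_mul_lower (Y m p : ℕ) (hm : 1 ≤ m) (hp : 1 ≤ p) (h : m * p ≤ Y) :
    1 / (m : ℝ) * (1 / p) * (0.5 + (if p ≤ Y / (m * 2) then 0.375 else 0) +
      (if p ≤ Y / (m * 4) then 0.09375 else 0)) ≤ kern Y (m * p) := by
  have hm' : (0 : ℝ) < m := by exact_mod_cast hm
  have hp' : (0 : ℝ) < p := by exact_mod_cast hp
  have hY : (m : ℝ) * p ≤ Y := by exact_mod_cast h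
  have hY0 : (0 : ℝ) < Y := lt_of_lt_of_le (mul_pos hm' hp') hY
  have e1 : kern Y (m * p) = 1 / (m : ℝ) * (1 / p) * (1 - (m * p / Y) ^ 2 / 2) := by
    rw [kern]; push_cast; field_simp
  rw [e1]
  refine mul_le_mul_of_nonneg_left ?_ (by positivity)
  have hu0 : 0 ≤ (m : ℝ) * p / Y := by positivity
  have hu1 : (m : ℝ) * p / Y ≤ 1 := (div_le_one hY0).mpr hY
  have h2 : p ≤ Y / (m * 2) → (m : ℝ) * p / Y ≤ 1 / 2 := by
    intro h
    rw [Nat.le_div_iff_mul_le (by omega)] at h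
    have : (p : ℝ) * (m * 2) ≤ Y := by exact_mod_cast h
    rw [div_le_iff₀ hY0]; linarith
  have h4 : p ≤ Y / (m * 4) → (m : ℝ) * p / Y ≤ 1 / 4 := by
    intro h
    rw [Nat.le_div_iff_mul_le (by omega)] at h
    have : (p : ℝ) * (m * 4) ≤ Y := by exact_mod_cast h
    rw [div_le_iff₀ hY0]; linarith
  have h42 : p ≤ Y / (m * 4) → p ≤ Y / (m * 2) := by
    intro h
    rw [Nat.le_div_iff_mul_le (by omega)] at h ⊢
    nlinarith
  set u := (m : ℝ) * p / Y
  split_ifs with ha hb hb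
  · have := h4 hb; nlinarith
  · have := h2 ha; nlinarith
  · exact absurd (h42 hb) ha
  · nlinarith

lemma sum_multiples_lower (F : ℕ → ℝ) (hF : ∀ n, 0 ≤ F n) (Y m : ℕ) (hm : 1 ≤ m) :
    1 / (m : ℝ) * (0.5 * ∑ p ∈ range (Y / m + 1), onPrimes F p / p +
      0.375 * ∑ p ∈ range (Y / (m * 2) + 1), onPrimes F p / p +
      0.09375 * ∑ p ∈ range (Y / (m * 4) + 1), onPrimes F p / p) ≤
    ∑ n ∈ Icc 1 Y, (if m ∣ n then onPrimes F (n / m) else 0) * kern Y n := by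
  have hA : ∀ z ≤ Y / m, ∑ p ∈ range (z + 1), onPrimes F p / p =
      ∑ p ∈ Icc 1 (Y / m), if p ≤ z then onPrimes F p / p else 0 := by
    intro z hz
    rw [← sum_filter]
    symm
    refine sum_subset (fun p hp ↦ ?_) fun p hp hp' ↦ ?_
    · simp only [mem_filter, mem_Icc, mem_range] at hp ⊢; omega
    · simp only [mem_filter, mem_Icc, mem_range] at hp hp'
      have : p = 0 := by omega
      simp [this]
  have h2 : Y / (m * 2) ≤ Y / m := Nat.div_le_div_left (by omega) (by omega)
  have h4 : Y / (m * 4) ≤ Y / m := Nat.div_le_div_left (by omega) (by omega)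
  rw [hA _ le_rfl, hA _ h2, hA _ h4, mul_sum, mul_sum, mul_sum, ← sum_add_distrib,
    ← sum_add_distrib, mul_sum]
  have hinj : Set.InjOn (fun p ↦ m * p) (Icc 1 (Y / m) : Finset ℕ) :=
    fun a _ b _ h ↦ Nat.eq_of_mul_eq_mul_left hm h
  have himg : (Icc 1 (Y / m)).image (fun p ↦ m * p) ⊆ Icc 1 Y := by
    intro n hn
    simp only [mem_image, mem_Icc] at hn ⊢
    obtain ⟨p, ⟨hp1, hp2⟩, rfl⟩ := hn
    rw [Nat.le_div_iff_mul_le (by omega)] at hp2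
    exact ⟨Nat.mul_pos hm hp1, by linarith⟩
  refine le_trans ?_ (sum_le_sum_of_subset_of_nonneg himg fun n hn _ ↦ ?_)
  · rw [sum_image hinj]
    refine sum_le_sum fun p hp ↦ ?_
    rw [mem_Icc] at hp
    have hp2 := hp.2
    rw [Nat.le_div_iff_mul_le (by omega)] at hp2
    have := mul_le_mul_of_nonneg_left (kern_mul_lower Y m p hm hp.1 (by linarith))
      (onPrimes_nonneg F hF p)
    rw [if_pos (dvd_mul_right m p), Nat.mul_div_cancel_left p (by omega)]
    refine le_trans (le_of_eq ?_) this
    rw [if_pos hp.2]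
    split_ifs <;> ring
  · rw [mem_Icc] at hn
    refine mul_nonneg ?_ (kern_nonneg Y n hn.1 hn.2)
    split_ifs
    · exact onPrimes_nonneg F hF _
    · exact le_rfl

/-- If `F` vanishes up to `M`, then an `n` has at most one factorisation `n = m p` with `m ≤ M` and `p`
a prime where `F` does not vanish, as such a `p` exceeds `M`. -/
lemma sum_onPrimes_div_le (F : ℕ → ℝ) (hF : ∀ n, 0 ≤ F n)
    (hone : ∀ m n, F m = 0 → F (m * n) = F n) (M : ℕ) (hM : ∀ m, 1 ≤ m → m ≤ M → F m = 0) (n : ℕ) :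
    ∑ m ∈ Icc 1 M, (if m ∣ n then onPrimes F (n / m) else 0) ≤ F n := by
  by_cases h : ∃ m ∈ Icc 1 M, (if m ∣ n then onPrimes F (n / m) else 0) ≠ 0
  · obtain ⟨m, hm, hne⟩ := h
    have hprop : ∀ m ∈ Icc 1 M, (if m ∣ n then onPrimes F (n / m) else 0) ≠ 0 →
        m ∣ n ∧ (n / m).Prime ∧ F (n / m) ≠ 0 ∧ M < n / m := by
      intro m hm hne
      have h1 : m ∣ n := by by_contra h; simp [h] at hne
      rw [if_pos h1, onPrimes] at hne
      have h2 : (n / m).Prime := by by_contra h; simp [h] at hne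
      rw [if_pos h2] at hne
      refine ⟨h1, h2, hne, ?_⟩
      by_contra h
      exact hne (hM _ h2.one_le (by omega))
    obtain ⟨h1, h2, h3, h4⟩ := hprop m hm hne
    rw [sum_eq_single_of_mem m hm]
    · rw [if_pos h1, onPrimes, if_pos h2]
      rw [mem_Icc] at hm
      have := hone m (n / m) (hM m hm.1 hm.2)
      rw [Nat.mul_div_cancel' h1] at this
      rw [this]
    · intro m' hm' hmm
      by_contra hne'
      obtain ⟨h1', h2', h3', h4'⟩ := hprop m' hm' hne'
      have e1 : m * (n / m) = m' * (n / m') := by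
        rw [Nat.mul_div_cancel' h1, Nat.mul_div_cancel' h1']
      have hdvd : n / m ∣ m' * (n / m') := ⟨m, by rw [← e1, mul_comm]⟩
      rw [mem_Icc] at hm'
      rcases (Nat.Prime.dvd_mul h2).mp hdvd with h | h
      · have := Nat.le_of_dvd (by omega) h
        omega
      · have := (Nat.prime_dvd_prime_iff_eq h2 h2').mp h
        rw [← this] at e1
        exact hmm (Nat.eq_of_mul_eq_mul_right h2.pos e1).symm
  · push Not at h
    rw [sum_eq_zero h]
    exact hF n

lemma sum_kern_lower (F : ℕ → ℝ) (hF : ∀ n, 0 ≤ F n)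
    (hone : ∀ m n, F m = 0 → F (m * n) = F n) (M : ℕ) (hM : ∀ m, 1 ≤ m → m ≤ M → F m = 0) (Y : ℕ) :
    ∑ m ∈ Icc 1 M, 1 / (m : ℝ) * (0.5 * ∑ p ∈ range (Y / m + 1), onPrimes F p / p +
      0.375 * ∑ p ∈ range (Y / (m * 2) + 1), onPrimes F p / p +
      0.09375 * ∑ p ∈ range (Y / (m * 4) + 1), onPrimes F p / p) ≤
    ∑ n ∈ Icc 1 Y, F n * kern Y n := by
  calc _ ≤ ∑ m ∈ Icc 1 M, ∑ n ∈ Icc 1 Y,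
        (if m ∣ n then onPrimes F (n / m) else 0) * kern Y n :=
        sum_le_sum fun m hm ↦ sum_multiples_lower F hF Y m (mem_Icc.mp hm).1
    _ = ∑ n ∈ Icc 1 Y, (∑ m ∈ Icc 1 M, if m ∣ n then onPrimes F (n / m) else 0) * kern Y n := by
        rw [sum_comm]; exact sum_congr rfl fun n _ ↦ (sum_mul ..).symm
    _ ≤ _ := sum_le_sum fun n hn ↦ by
        rw [mem_Icc] at hn
        exact mul_le_mul_of_nonneg_right (sum_onPrimes_div_le F hF hone M hM n)
          (kern_nonneg Y n hn.1 hn.2)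

lemma log_thirteen : Real.log 13 ≤ 2.6 := by
  have h : Real.log ((13 : ℝ) ^ 4) ≤ Real.log ((2 : ℝ) ^ 15) :=
    Real.log_le_log (by norm_num) (by norm_num)
  rw [Real.log_pow, Real.log_pow] at h
  have := Real.log_two_lt_d9
  push_cast at h
  linarith

/-- The explicit form of `sum_onPrimes_lower` at `z = ⌊Y / d⌋` for small `d`. -/
lemma sum_onPrimes_div_lower (F : ℕ → ℝ) (hF : ∀ n, 0 ≤ F n) (hF2 : ∀ n, F n ≤ 2) (h1 : F 1 = 0)
    (hmul : ∀ m n, F (m * n) ≤ F m + F n) (hpow : ∀ m k, F (m ^ (k + 1)) ≤ F m) (Y : ℕ)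
    (hD : ∀ t, tentSum (fun n ↦ 1 - F n) t ≤ Y * t / 2) (hY : 26.67 ≤ Real.log Y) (d : ℕ)
    (hd1 : 1 ≤ d) (hd : d ≤ 64) (hYd : 2 ^ 30 ≤ Y / d) :
    0.6516 - 0.101 * Real.log d ≤ ∑ p ∈ range (Y / d + 1), onPrimes F p / p := by
  obtain ⟨z, hz⟩ : ∃ z, z = Y / d := ⟨_, rfl⟩
  rw [← hz] at hYd ⊢
  have hzY : z ≤ Y := hz ▸ Nat.div_le_self Y d
  have h := sum_onPrimes_lower F hF hF2 h1 hmul hpow Y hD z (by omega) hzY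
  have hz0 : (2 : ℝ) ^ 30 ≤ z := by exact_mod_cast hYd
  have hzpos : (0 : ℝ) < z := lt_of_lt_of_le (by norm_num) hz0
  have hd0 : (0 : ℝ) < d := by exact_mod_cast hd1
  have hYpos : (0 : ℝ) < Y := lt_of_lt_of_le hzpos (by exact_mod_cast hzY)
  rw [Real.log_mul (by norm_num) hYpos.ne'] at h
  -- `Y < d * (z + 1)`, so `log Y - log z` exceeds `log d` by at most `1 / z`
  have hx : Real.log Y - Real.log z ≤ Real.log d + 0.000001 := by
    have h2 : (Y : ℝ) ≤ d * (z + 1) := by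
      have := Nat.lt_mul_div_succ Y (show 0 < d by omega)
      rw [← hz] at this
      exact_mod_cast this.le
    have h3 := Real.log_le_log hYpos h2
    rw [Real.log_mul hd0.ne' (by positivity)] at h3
    have h4 := Real.log_le_sub_one_of_pos (show 0 < ((z : ℝ) + 1) / z by positivity)
    rw [Real.log_div (by positivity) hzpos.ne', add_div, div_self hzpos.ne'] at h4
    have h5 : 1 / (z : ℝ) ≤ 0.000001 := by
      rw [div_le_iff₀ hzpos]; linarith
    linarith
  have hx0 : 0 ≤ Real.log Y - Real.log z :=
    sub_nonneg.mpr (Real.log_le_log hzpos (by exact_mod_cast hzY))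
  have hd64 : Real.log d ≤ 4.159 := by
    have h2 : Real.log d ≤ Real.log ((2 : ℝ) ^ 6) :=
      Real.log_le_log hd0 (by norm_num; exact_mod_cast hd)
    rw [Real.log_pow] at h2
    have := Real.log_two_lt_d9
    push_cast at h2
    linarith
  obtain ⟨x, hxdef⟩ : ∃ x, x = Real.log Y - Real.log z := ⟨_, rfl⟩
  have hlz : Real.log z = Real.log Y - x := by rw [hxdef]; ring
  rw [← hxdef] at hx hx0
  have h13 := log_thirteen
  -- the chord bound for the convex function `x ↦ 2 (3.608 + x) / (26.67 - x)` on `[0, 4.16]`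
  have hfrac : 2 * (Real.log 13 + Real.log Y - Real.log z + 1.008) / Real.log z ≤
      0.2708 + 0.101 * x := by
    have hlz' : 26.67 - x ≤ Real.log z := by linarith
    have hlzpos : 0 < Real.log z := by linarith
    rw [div_le_iff₀ hlzpos]
    calc 2 * (Real.log 13 + Real.log Y - Real.log z + 1.008) ≤ 2 * (3.608 + x) := by linarith
      _ ≤ (0.2708 + 0.101 * x) * (26.67 - x) := by nlinarith
      _ ≤ _ := by gcongr
  linarith

/-- The saving when `F` vanishes up to `16`. -/
lemma sum_kern_lower_of_vanishing (F : ℕ → ℝ) (hF : ∀ n, 0 ≤ F n) (hF2 : ∀ n, F n ≤ 2)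
    (hmul : ∀ m n, F (m * n) ≤ F m + F n) (hpow : ∀ m k, F (m ^ (k + 1)) ≤ F m)
    (hone : ∀ m n, F m = 0 → F (m * n) = F n) (hM : ∀ m, 1 ≤ m → m ≤ 16 → F m = 0) (Y : ℕ)
    (hD : ∀ t, tentSum (fun n ↦ 1 - F n) t ≤ Y * t / 2) (hY : 26.67 ≤ Real.log Y) (hY2 : 2 ^ 38 ≤ Y) :
    1.53 ≤ ∑ n ∈ Icc 1 Y, F n * kern Y n := by
  refine le_trans ?_ (sum_kern_lower F hF hone 16 hM Y)
  have hA : ∀ d : ℕ, 1 ≤ d → d ≤ 64 →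
      0.6516 - 0.101 * Real.log d ≤ ∑ p ∈ range (Y / d + 1), onPrimes F p / p := by
    intro d hd1 hd
    refine sum_onPrimes_div_lower F hF hF2 (hM 1 le_rfl (by norm_num)) hmul hpow Y hD hY d hd1 hd ?_
    rw [Nat.le_div_iff_mul_le hd1]
    nlinarith
  have hl2 := Real.log_two_lt_d9
  have hl2' := Real.log_two_gt_d9
  have hterm : ∀ m ∈ Icc (1 : ℕ) 16, 1 / (m : ℝ) * (0.5918 - 0.09785 * Real.log m) ≤
      1 / (m : ℝ) * (0.5 * ∑ p ∈ range (Y / m + 1), onPrimes F p / p +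
      0.375 * ∑ p ∈ range (Y / (m * 2) + 1), onPrimes F p / p +
      0.09375 * ∑ p ∈ range (Y / (m * 4) + 1), onPrimes F p / p) := by
    intro m hm
    rw [mem_Icc] at hm
    refine mul_le_mul_of_nonneg_left ?_ (by positivity)
    have hm0 : (m : ℝ) ≠ 0 := by
      have : m ≠ 0 := by omega
      exact_mod_cast this
    have a1 := hA m hm.1 (by omega)
    have a2 := hA (m * 2) (by omega) (by omega)
    have a4 := hA (m * 4) (by omega) (by omega)
    rw [Nat.cast_mul, Real.log_mul hm0 (by norm_num)] at a2 a4
    have e4 : Real.log ((4 : ℕ) : ℝ) = 2 * Real.log 2 := by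
      rw [show (((4 : ℕ) : ℝ)) = 2 ^ 2 by norm_num, Real.log_pow]; norm_num
    rw [e4] at a4
    push_cast at a2
    have hlm : 0 ≤ Real.log m := Real.log_natCast_nonneg m
    linarith
  refine le_trans ?_ (sum_le_sum hterm)
  -- an inequality `a ^ k ≤ 2 ^ j` between integers bounds `log a` by a multiple of `log 2`
  have hpow2 : ∀ a k j : ℕ, 0 < a → 0 < k → a ^ k ≤ 2 ^ j → k * Real.log a ≤ j * Real.log 2 := by
    intro a k j ha _ h
    rw [← Real.log_pow, ← Real.log_pow]
    refine Real.log_le_log (by positivity) ?_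
    exact_mod_cast h
  have l3 := hpow2 3 5 8 (by norm_num) (by norm_num) (by norm_num)
  have l5 := hpow2 5 3 7 (by norm_num) (by norm_num) (by norm_num)
  have l7 := hpow2 7 6 17 (by norm_num) (by norm_num) (by norm_num)
  have l11 := hpow2 11 2 7 (by norm_num) (by norm_num) (by norm_num)
  have l13 := hpow2 13 4 15 (by norm_num) (by norm_num) (by norm_num)
  have l4 := hpow2 4 1 2 (by norm_num) (by norm_num) (by norm_num)
  have l8 := hpow2 8 1 3 (by norm_num) (by norm_num) (by norm_num)
  have l16 := hpow2 16 1 4 (by norm_num) (by norm_num) (by norm_num)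
  have l6 := hpow2 6 5 13 (by norm_num) (by norm_num) (by norm_num)
  have l9 := hpow2 9 5 16 (by norm_num) (by norm_num) (by norm_num)
  have l10 := hpow2 10 3 10 (by norm_num) (by norm_num) (by norm_num)
  have l12 := hpow2 12 5 18 (by norm_num) (by norm_num) (by norm_num)
  have l14 := hpow2 14 6 23 (by norm_num) (by norm_num) (by norm_num)
  have l15 := hpow2 15 1 4 (by norm_num) (by norm_num) (by norm_num)
  simp only [show Icc (1 : ℕ) 16 = {1, 2, 3, 4, 5, 6, 7, 8, 9, 10, 11, 12, 13, 14, 15, 16} from rfl]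
  repeat rw [sum_insert (by simp)]
  rw [sum_singleton]
  push_cast at *
  rw [Real.log_one]
  linarith

/-- The saving when `F r ≥ 1` for some `r ≤ 13`. For each `n` one of `F n`, `F (r n)` is at least `1`, so
the terms at `n` and at `r n` together give a harmonic sum up to `Y / r`. -/
lemma sum_kern_lower_of_nonvanishing (F : ℕ → ℝ) (hF : ∀ n, 0 ≤ F n)
    (hval : ∀ n, F n = 0 ∨ 1 ≤ F n) (hone : ∀ m n, F m = 0 → F (m * n) = F n)
    (r : ℕ) (hr1 : 1 ≤ r) (hr : r ≤ 13) (hFr : 1 ≤ F r) (Y : ℕ)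
    (hY : 26.67 ≤ Real.log Y) (hY2 : 2 ^ 38 ≤ Y) :
    1.53 ≤ ∑ n ∈ Icc 1 Y, F n * kern Y n := by
  set V := ∑ n ∈ Icc 1 Y, F n * kern Y n with hV
  have hYr : (2 : ℝ) ^ 38 ≤ Y := by exact_mod_cast hY2
  have hY0 : (0 : ℝ) < Y := lt_of_lt_of_le (by norm_num) hYr
  have hr0 : (0 : ℝ) < r := by exact_mod_cast hr1
  have hr1' : (1 : ℝ) ≤ r := by exact_mod_cast hr1
  have hr' : (r : ℝ) ≤ 13 := by exact_mod_cast hr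
  have hnn : ∀ n ∈ Icc 1 Y, 0 ≤ F n * kern Y n := fun n hn ↦
    mul_nonneg (hF n) (kern_nonneg Y n (mem_Icc.mp hn).1 (mem_Icc.mp hn).2)
  have hV0 : 0 ≤ V := sum_nonneg hnn
  obtain ⟨M, hM⟩ : ∃ M, M = Y / r := ⟨_, rfl⟩
  have hrM : ∀ n ∈ Icc 1 M, 1 ≤ r * n ∧ r * n ≤ Y := by
    intro n hn
    rw [mem_Icc, hM, Nat.le_div_iff_mul_le hr1] at hn
    exact ⟨Nat.mul_pos hr1 hn.1, by linarith⟩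
  have hFn : ∀ n, 1 ≤ F n + F (r * n) := by
    intro n
    rcases hval n with h | h
    · have := hone n r h
      rw [mul_comm, this]
      linarith [hF n]
    · linarith [hF (r * n)]
  have h1 : ∑ n ∈ Icc 1 M, F (r * n) * kern Y (r * n) ≤ V := by
    rw [← sum_image (f := fun n ↦ F n * kern Y n) (g := fun n ↦ r * n)
      (fun a _ b _ h ↦ Nat.eq_of_mul_eq_mul_left hr1 h)]
    refine sum_le_sum_of_subset_of_nonneg (fun n hn ↦ ?_) fun n hn _ ↦ hnn n hn
    rw [mem_image] at hn
    obtain ⟨k, hk, rfl⟩ := hn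
    exact mem_Icc.mpr (hrM k hk)
  have h2 : ∑ n ∈ Icc 1 M, F n * kern Y (r * n) ≤ V / r := by
    have hsub : Icc 1 M ⊆ Icc 1 Y := Icc_subset_Icc le_rfl (hM ▸ Nat.div_le_self Y r)
    rw [hV, sum_div]
    refine le_trans (sum_le_sum fun n hn ↦ ?_) (sum_le_sum_of_subset_of_nonneg hsub
      fun n hn _ ↦ div_nonneg (hnn n hn) hr0.le)
    rw [mul_div_assoc]
    refine mul_le_mul_of_nonneg_left ?_ (hF n)
    rw [kern, kern, sub_div, div_div, mul_comm (n : ℝ) r, Nat.cast_mul]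
    have : (n : ℝ) / (2 * (Y : ℝ) ^ 2) / r ≤ r * n / (2 * (Y : ℝ) ^ 2) := by
      rw [div_div, div_le_div_iff₀ (by positivity) (by positivity)]
      have : (n : ℝ) * (2 * (Y : ℝ) ^ 2) * 1 ≤ (n : ℝ) * (2 * (Y : ℝ) ^ 2) * (r * r) := by
        gcongr; nlinarith
      linarith
    linarith
  have h3 : ∑ n ∈ Icc 1 M, kern Y (r * n) ≤ V + V / r := by
    refine le_trans ?_ (add_le_add h1 h2)
    rw [← sum_add_distrib]
    refine sum_le_sum fun n hn ↦ ?_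
    have := mul_le_mul_of_nonneg_right (hFn n) (kern_nonneg Y _ (hrM n hn).1 (hrM n hn).2)
    linarith
  have h4 : ∑ n ∈ Icc 1 M, kern Y (r * n) =
      1 / r * (harmonic M : ℝ) - r / (2 * (Y : ℝ) ^ 2) * (M * (M + 1) / 2) := by
    have hs : ∑ n ∈ Icc 1 M, (n : ℝ) = M * (M + 1) / 2 := by
      clear hM h1 h2 h3 hrM
      induction M with
      | zero => simp
      | succ M ih => rw [sum_Icc_succ_top (by omega), ih]; push_cast; ring
    rw [← hs, harmonic_eq_sum_Icc, Rat.cast_sum, mul_sum, mul_sum, ← sum_sub_distrib]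
    refine sum_congr rfl fun n _ ↦ ?_
    rw [kern]
    push_cast
    rw [one_div, mul_inv]
    ring
  have h5 : Real.log Y - Real.log r ≤ harmonic M := by
    refine le_trans ?_ (log_add_one_le_harmonic M)
    rw [← Real.log_div hY0.ne' hr0.ne']
    refine Real.log_le_log (by positivity) ?_
    rw [div_le_iff₀ hr0]
    have := Nat.lt_mul_div_succ Y hr1
    rw [← hM] at this
    have h : (Y : ℝ) ≤ r * (M + 1) := by exact_mod_cast this.le
    push_cast
    linarith
  have hlr : Real.log r ≤ 2.6 := (Real.log_le_log hr0 hr').trans log_thirteen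
  have h6 : (r : ℝ) / (2 * (Y : ℝ) ^ 2) * (M * (M + 1) / 2) ≤ 1 / r * 0.26 := by
    have hMY : r * (M : ℝ) ≤ Y := by
      have := Nat.mul_div_le Y r
      rw [← hM] at this
      exact_mod_cast this
    rw [div_mul_div_comm, div_mul_eq_mul_div, div_le_div_iff₀ (by positivity) hr0]
    have hM0 : (0 : ℝ) ≤ M := by positivity
    have : (r * (M : ℝ)) * (r * M + r) ≤ Y * (Y + 13) := by gcongr
    nlinarith
  rw [h4] at h3
  -- `log Y - log r ≥ 26.67 - 2.6 = 24.07`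
  have h7 : 1 / (r : ℝ) * 23.8 ≤ V + V / r := by
    have : 1 / (r : ℝ) * 24.07 ≤ 1 / r * harmonic M := by gcongr; linarith
    have h0 : 0 ≤ 1 / (r : ℝ) := by positivity
    linarith
  have h8 : 23.8 ≤ V * r + V := by
    have := mul_le_mul_of_nonneg_right h7 hr0.le
    field_simp at this
    linarith
  nlinarith

/-! ### Assembly of the estimates -/

/-- Numerical facts about `Y = ⌈√q⌉`. -/
lemma ceil_sqrt_bounds (q : ℕ) (hq : 2 * 10 ^ 23 ≤ q) :
    26.67 ≤ Real.log ⌈√(q : ℝ)⌉₊ ∧ 2 ^ 38 ≤ ⌈√(q : ℝ)⌉₊ ∧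
      Real.log ⌈√(q : ℝ)⌉₊ ≤ Real.log q / 2 + 0.0008 := by
  have hqr : (2 : ℝ) ^ 77 ≤ q := by
    have : 2 ^ 77 ≤ q := by omega
    exact_mod_cast this
  have hq0 : (0 : ℝ) < q := lt_of_lt_of_le (by norm_num) hqr
  have hs : (2 : ℝ) ^ 38 ≤ √(q : ℝ) := Real.le_sqrt_of_sq_le (by linarith)
  have hs0 : 0 < √(q : ℝ) := lt_of_lt_of_le (by norm_num) hs
  have hY := Nat.le_ceil √(q : ℝ)
  have hlog : Real.log √(q : ℝ) = Real.log q / 2 := Real.log_sqrt hq0.le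
  have hl := Real.log_le_log (by norm_num) hqr
  rw [Real.log_pow] at hl
  have hl2 := Real.log_two_gt_d9
  push_cast at hl
  refine ⟨?_, by exact_mod_cast hs.trans hY, ?_⟩
  · have := Real.log_le_log hs0 hY
    linarith
  · have h1 := (Nat.ceil_lt_add_one hs0.le).le
    have h2 := Real.log_le_log (hs0.trans_le hY) h1
    have h3 : √(q : ℝ) + 1 = √(q : ℝ) * (1 + 1 / √(q : ℝ)) := by field_simp
    rw [h3, Real.log_mul hs0.ne' (by positivity), hlog] at h2
    have h4 := Real.log_le_sub_one_of_pos (show 0 < 1 + 1 / √(q : ℝ) by positivity)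
    have h5 : 1 / √(q : ℝ) ≤ 0.0008 := by
      rw [div_le_iff₀ hs0]; linarith
    linarith

open Filter Topology in
lemma LFunction_one_le {q : ℕ} [NeZero q] (hq : 2 * 10 ^ 23 ≤ q) (χ : DirichletCharacter ℂ q)
    (hprim : χ.IsPrimitive) (hχ : χ ≠ 1) (hquad : χ ^ 2 = 1)
    (hreal : ∀ n : ZMod q, (χ n).im = 0) :
    (χ.LFunction 1).re ≤ Real.log q / 2 ∧ (χ.LFunction 1).im = 0 := by
  have hq1 : 1 < q := by omega
  have : Fact (1 < q) := ⟨hq1⟩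
  have hlim := tendsto_sum_div hq1 χ hχ
  have him : (χ.LFunction 1).im = 0 := by
    have h := (Complex.continuous_im.tendsto _).comp hlim
    refine tendsto_nhds_unique h (Tendsto.congr (fun n ↦ ?_) tendsto_const_nhds)
    simp [Complex.im_sum, hreal]
  refine ⟨?_, him⟩
  obtain ⟨f, hf⟩ : ∃ f : ℕ → ℝ, f = fun n : ℕ ↦ (χ (n : ZMod q)).re := ⟨_, rfl⟩
  have hfχ : ∀ n : ℕ, ((f n : ℝ) : ℂ) = χ (n : ZMod q) := fun n ↦ by
    rw [hf]; exact Complex.ext rfl (hreal n).symm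
  have hf0 : f 0 = 0 := by
    rw [hf]; simp [MulChar.map_zero]
  have hf1 : f 1 = 1 := by
    rw [hf]; simp
  have hfmul : ∀ m n, f (m * n) = f m * f n := by
    intro m n
    have : ((f (m * n) : ℝ) : ℂ) = ((f m * f n : ℝ) : ℂ) := by
      rw [Complex.ofReal_mul, hfχ, hfχ, hfχ, Nat.cast_mul, map_mul]
    exact_mod_cast this
  have hfval : ∀ n, f n = 0 ∨ f n = 1 ∨ f n = -1 := by
    intro n
    by_cases hu : IsUnit (n : ZMod q)
    · right
      have h : (χ ^ 2) (n : ZMod q) = 1 := by rw [hquad]; exact MulChar.one_apply hu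
      rw [MulChar.pow_apply' _ two_ne_zero, ← hfχ] at h
      have h' : f n ^ 2 = 1 := by exact_mod_cast h
      simpa using h'
    · left
      rw [hf]; simp [MulChar.map_nonunit χ hu]
  obtain ⟨F, hF⟩ : ∃ F : ℕ → ℝ, F = fun n ↦ 1 - f n := ⟨_, rfl⟩
  have hFf : (fun n ↦ 1 - F n) = f := by rw [hF]; ext n; ring
  have hFnn : ∀ n, 0 ≤ F n := by
    intro n; rw [hF]; rcases hfval n with h | h | h <;> simp only [h] <;> norm_num
  have hF2 : ∀ n, F n ≤ 2 := by
    intro n; rw [hF]; rcases hfval n with h | h | h <;> simp only [h] <;> norm_num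
  have hFval : ∀ n, F n = 0 ∨ 1 ≤ F n := by
    intro n; rw [hF]; rcases hfval n with h | h | h <;> simp only [h] <;> norm_num
  have hFmul : ∀ m n, F (m * n) ≤ F m + F n := by
    intro m n
    rw [hF]
    simp only [hfmul]
    rcases hfval m with h | h | h <;> rcases hfval n with h' | h' | h' <;>
      simp only [h, h'] <;> norm_num
  have hFone : ∀ m n, F m = 0 → F (m * n) = F n := by
    intro m n h
    rw [hF] at h ⊢
    have h' : f m = 1 := by linarith
    simp only [hfmul, h', one_mul]
  have hFpow : ∀ m k, F (m ^ (k + 1)) ≤ F m := by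
    intro m k
    have hp : ∀ k, f (m ^ k) = f m ^ k := by
      intro k
      induction k with
      | zero => simp [hf1]
      | succ k ih => rw [pow_succ, hfmul, ih, pow_succ]
    rw [hF]
    simp only [hp]
    rcases hfval m with h | h | h
    · simp [h]
    · simp [h]
    · rw [h]
      rcases neg_one_pow_eq_or ℝ (k + 1) with h | h <;> rw [h] <;> norm_num
  obtain ⟨Y, hY⟩ : ∃ Y, Y = ⌈√(q : ℝ)⌉₊ := ⟨_, rfl⟩
  obtain ⟨hY1, hY2, hY3⟩ := ceil_sqrt_bounds q hq
  have hqY := Nat.le_ceil √(q : ℝ)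
  rw [← hY] at hY1 hY2 hY3 hqY
  have hD : ∀ t, tentSum (fun n ↦ 1 - F n) t ≤ Y * t / 2 := by
    intro t
    rw [hFf, tentSum_eq_sum_sum]
    have h := bilinear χ hprim hχ hquad (t / 2) ((t + 1) / 2)
    have hsum : ∑ k ∈ range (t / 2), ∑ l ∈ range ((t + 1) / 2), χ (1 + k + l) =
        ((∑ k ∈ range (t / 2), ∑ l ∈ range ((t + 1) / 2), f (1 + k + l) : ℝ) : ℂ) := by
      push_cast
      refine sum_congr rfl fun k _ ↦ sum_congr rfl fun l _ ↦ ?_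
      rw [hfχ]; push_cast; rfl
    rw [hsum, Complex.norm_real, Real.norm_eq_abs, sq_abs] at h
    refine le_of_sq_le_sq ?_ (by positivity)
    have hab : ((t / 2 : ℕ) : ℝ) * ((t + 1) / 2 : ℕ) ≤ (t : ℝ) ^ 2 / 4 := by
      have h1 : ((t / 2 : ℕ) : ℝ) + ((t + 1) / 2 : ℕ) = t := by
        exact_mod_cast (by omega : t / 2 + (t + 1) / 2 = t)
      rw [← h1]
      nlinarith [sq_nonneg (((t / 2 : ℕ) : ℝ) - ((t + 1) / 2 : ℕ))]
    have hq2 : (q : ℝ) ≤ Y ^ 2 := by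
      rw [← Real.sq_sqrt (Nat.cast_nonneg q)]
      gcongr
    calc _ ≤ _ := h
      _ = q * (((t / 2 : ℕ) : ℝ) * ((t + 1) / 2 : ℕ)) := by ring
      _ ≤ (Y : ℝ) ^ 2 * ((t : ℝ) ^ 2 / 4) := by gcongr
      _ = _ := by ring
  have hV : 1.53 ≤ ∑ n ∈ Icc 1 Y, F n * kern Y n := by
    by_cases hr : ∃ r, 1 ≤ r ∧ r ≤ 13 ∧ F r ≠ 0
    · obtain ⟨r, hr1, hr2, hr3⟩ := hr
      exact sum_kern_lower_of_nonvanishing F hFnn hFval hFone r hr1 hr2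
        ((hFval r).resolve_left hr3) Y hY1 hY2
    · push Not at hr
      refine sum_kern_lower_of_vanishing F hFnn hF2 hFmul hFpow hFone (fun m h1 h2 ↦ ?_) Y hD
        hY1 hY2
      -- multiplicativity extends the vanishing from `m ≤ 13` to `m ≤ 16`
      have h14 : F (2 * 7) = 0 := by
        rw [hFone 2 7 (hr 2 (by norm_num) (by norm_num)), hr 7 (by norm_num) (by norm_num)]
      have h15 : F (3 * 5) = 0 := by
        rw [hFone 3 5 (hr 3 (by norm_num) (by norm_num)), hr 5 (by norm_num) (by norm_num)]
      have h16 : F (2 * 8) = 0 := by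
        rw [hFone 2 8 (hr 2 (by norm_num) (by norm_num)), hr 8 (by norm_num) (by norm_num)]
      rcases (by omega : m ≤ 13 ∨ m = 2 * 7 ∨ m = 3 * 5 ∨ m = 2 * 8) with h | h | h | h
      · exact hr m h1 h
      all_goals rw [h]; assumption
  have hsumf : ∀ n, |∑ k ∈ range n, f k| ≤ q := by
    intro n
    rcases n with _ | n
    · simp
    have h := norm_sum_le_q χ hχ n
    have hs : ∑ k ∈ Icc 1 n, χ (k : ZMod q) = ((∑ k ∈ range (n + 1), f k : ℝ) : ℂ) := by
      rw [sum_range_succ', hf0, add_zero, ← Finset.Ico_add_one_right_eq_Icc,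
        Finset.sum_Ico_eq_sum_range, Complex.ofReal_sum, Nat.add_sub_cancel]
      refine sum_congr rfl fun k _ ↦ ?_
      rw [hfχ, add_comm]
    rwa [hs, Complex.norm_real] at h
  have hlimf : Tendsto (fun n : ℕ ↦ ∑ k ∈ Icc 0 n, (k : ℝ)⁻¹ * f k) atTop
      (𝓝 (χ.LFunction 1).re) := by
    refine Tendsto.congr (fun n ↦ ?_) ((Complex.continuous_re.tendsto _).comp hlim)
    rw [Function.comp_apply, Complex.re_sum]
    refine sum_congr rfl fun k _ ↦ ?_
    rw [Complex.re_ofReal_mul, hf]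
  have hlimD := tendsto_tentCoeff_tentSum f hf0 q _ hsumf hlimf
  have hbound : (χ.LFunction 1).re ≤
      Real.log Y + 1.5292 - ∑ n ∈ Icc 1 Y, F n * (1 / (n : ℝ) - n / (2 * (Y : ℝ) ^ 2)) := by
    refine le_of_tendsto hlimD (eventually_atTop.mpr ⟨Y, fun N hN ↦ ?_⟩)
    have := partial_le F hFnn Y (by omega) hD (2 * (N + 1) + 2) (by omega)
    rwa [hFf] at this
  have hV' : ∑ n ∈ Icc 1 Y, F n * (1 / (n : ℝ) - n / (2 * (Y : ℝ) ^ 2)) =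
    ∑ n ∈ Icc 1 Y, F n * kern Y n := rfl
  rw [hV'] at hbound
  linarith

end

theorem L_one_le_half_log_of_odd_quadratic
    (q : ℕ) (hq : 2 * 10 ^ 23 ≤ q)
    (χ : DirichletCharacter ℂ q) (hprim : χ.IsPrimitive)
    (hnonprincipal : χ ≠ 1) (hquadratic : χ ^ 2 = 1)
    (hreal : ∀ n : ZMod q, (χ n).im = 0)
    (hpar : χ (-1) = -1) :
    haveI : NeZero q := ⟨by omega⟩
    χ.LFunction 1 ≤ ((Real.log q / 2 : ℝ) : ℂ) := by
  have : NeZero q := ⟨by omega⟩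
  obtain ⟨h1, h2⟩ := LFunction_one_le hq χ hprim hnonprincipal hquadratic hreal
  rw [Complex.le_def]
  exact ⟨by rwa [Complex.ofReal_re], by rwa [Complex.ofReal_im]⟩
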